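/- arXiv:2209.15394 — 2 statements merged into one kernel-verified Lean document; each statement's English description precedes it below -/
import Mathlib

section
/- Let X be a Peano continuum having uncountably many local cut points. Then X is a topological fractal; moreover there exists a witnessing family consisting of at most three maps (so the witnessing number of X is at most three). -/
/-- A family `F` of self-maps of a metric space `X` is topologically contractive if for
every `ε > 0` there is `k` such that every composition of `k` maps from `F` has image of
diameter less than `ε`. -/
def TopContractive {X : Type*} [MetricSpace X] (F : Set (X → X)) : Prop :=
  ∀ ε > (0 : ℝ), ∃ k : ℕ, ∀ l : List (X → X), (∀ f ∈ l, f ∈ F) → l.length = k →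
    Metric.diam (Set.range (l.foldr (· ∘ ·) id)) < ε

/-- `x` is a local cut point of `X` if it has a connected neighborhood `U` such that
`U \ {x}` is not connected. -/
def IsLocalCutPoint {X : Type*} [TopologicalSpace X] (x : X) : Prop :=
  ∃ U : Set X, U ∈ nhds x ∧ IsConnected U ∧ ¬ IsPreconnected (U \ {x})
open Set Filter Topology

/-! ### Continuous surjections from an interval onto a Peano continuum -/

/-- `u` is a sequence in `D` that starts at `x`, has steps shorter than `η`, is constantly `y` from
time `m` on, and visits every point of `N` by time `m`. -/
structure IsStepChain {Y : Type*} [MetricSpace Y] (η : ℝ) (D : Set Y) (x y : Y) (N : Set Y)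
    (m : ℕ) (u : ℕ → Y) : Prop where
  start : u 0 = x
  end_eq : ∀ i, m ≤ i → u i = y
  mem : ∀ i, u i ∈ D
  dist_lt : ∀ i, dist (u i) (u (i + 1)) < η
  visits : ∀ z ∈ N, ∃ i ≤ m, u i = z

theorem IsStepChain.append {Y : Type*} [MetricSpace Y] {η : ℝ} {D : Set Y} {x y z : Y}
    {N N' : Set Y} {m m' : ℕ} {u u' : ℕ → Y} (h : IsStepChain η D x y N m u)
    (h' : IsStepChain η D y z N' m' u') :
    IsStepChain η D x z (N ∪ N') (m + m') (fun i => if i < m then u i else u' (i - m)) where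
  start := by
    rcases Nat.eq_zero_or_pos m with rfl | hm
    · simp [h'.start, ← h.start, h.end_eq 0 le_rfl]
    · simp [hm, h.start]
  end_eq i hi := by
    rw [if_neg (by omega)]
    exact h'.end_eq _ (by omega)
  mem i := by
    split_ifs
    · exact h.mem i
    · exact h'.mem _
  dist_lt i := by
    rcases lt_trichotomy (i + 1) m with hi | hi | hi
    · rw [if_pos (by omega), if_pos hi]
      exact h.dist_lt i
    · rw [if_pos (by omega), if_neg (by omega), hi, Nat.sub_self, h'.start,
        ← h.end_eq (i + 1) hi.ge]
      exact h.dist_lt i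
    · rw [if_neg (by omega), if_neg (by omega), show i + 1 - m = (i - m) + 1 by omega]
      exact h'.dist_lt _
  visits w hw := by
    rcases hw with hw | hw
    · obtain ⟨i, him, rfl⟩ := h.visits w hw
      refine ⟨i, by omega, ?_⟩
      rcases him.lt_or_eq with h1 | rfl
      · rw [if_pos h1]
      · rw [if_neg (by omega), Nat.sub_self, h'.start, h.end_eq i le_rfl]
    · obtain ⟨i, him, rfl⟩ := h'.visits w hw
      refine ⟨m + i, by omega, ?_⟩
      rw [if_neg (by omega), Nat.add_sub_cancel_left]

theorem IsPreconnected.exists_isStepChain_empty {Y : Type*} [MetricSpace Y] {D : Set Y}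
    (hD : IsPreconnected D) {η : ℝ} (hη : 0 < η) {x y : Y} (hx : x ∈ D) (hy : y ∈ D) :
    ∃ m u, IsStepChain η D x y ∅ m u := by
  refine hD.induction₂' (fun x y => ∃ m u, IsStepChain η D x y ∅ m u) ?_ ?_ hx hy
  · intro x hx
    have key : ∀ a ∈ D, ∀ b ∈ D, dist a b < η → ∃ m u, IsStepChain η D a b ∅ m u := by
      intro a ha b hb hab
      refine ⟨1, fun i => if i = 0 then a else b, rfl, ?_, ?_, ?_, by simp⟩
      · intro i hi
        rw [if_neg (by omega)]
      · intro i
        split_ifs <;> assumption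
      · intro i
        rcases Nat.eq_zero_or_pos i with rfl | hi
        · simpa using hab
        · rw [if_neg (by omega), if_neg (by omega), dist_self]
          exact hη
    filter_upwards [self_mem_nhdsWithin, mem_nhdsWithin_of_mem_nhds (Metric.ball_mem_nhds x hη)]
      with b hb hb'
    exact ⟨key x hx b hb (by rwa [dist_comm]), key b hb x hx hb'⟩
  · rintro a b c - - - ⟨m, u, hu⟩ ⟨m', u', hu'⟩
    exact ⟨_, _, by simpa using hu.append hu'⟩

theorem IsPreconnected.exists_isStepChain {Y : Type*} [MetricSpace Y] {D : Set Y}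
    (hD : IsPreconnected D) {η : ℝ} (hη : 0 < η) {y : Y} (hy : y ∈ D) {N : Set Y}
    (hN : N.Finite) (hND : N ⊆ D) {x : Y} (hx : x ∈ D) :
    ∃ m u, IsStepChain η D x y N m u := by
  induction N, hN using Set.Finite.induction_on generalizing x with
  | empty => exact hD.exists_isStepChain_empty hη hx hy
  | @insert a N _ _ ih =>
    have ha : a ∈ D := hND (mem_insert _ _)
    obtain ⟨m, u, hu⟩ := hD.exists_isStepChain_empty hη hx ha
    obtain ⟨m', u', hu'⟩ := ih ((subset_insert _ _).trans hND) ha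
    refine ⟨_, _, (hu.append hu').start, (hu.append hu').end_eq, (hu.append hu').mem,
      (hu.append hu').dist_lt, ?_⟩
    rintro z (rfl | hz)
    · refine ⟨m, by omega, ?_⟩
      simp [hu'.start]
    · exact (hu.append hu').visits z (Or.inr hz)

/-- In a compact space, a preconnected set can be crossed by an `η`-chain that is `η`-dense. -/
theorem IsPreconnected.exists_dense_isStepChain {Y : Type*} [MetricSpace Y] [CompactSpace Y]
    {D : Set Y} (hD : IsPreconnected D) {η : ℝ} (hη : 0 < η) {x y : Y} (hx : x ∈ D) (hy : y ∈ D) :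
    ∃ m u N, IsStepChain η D x y N m u ∧ ∀ z ∈ D, ∃ w ∈ N, dist z w < η := by
  have htb : TotallyBounded D := (isCompact_univ.totallyBounded).subset (subset_univ D)
  obtain ⟨N, hND, hN, hcov⟩ := totallyBounded_iff_subset.1 htb
    {p | dist p.1 p.2 < η} (Metric.dist_mem_uniformity hη)
  obtain ⟨m, u, hu⟩ := hD.exists_isStepChain hη hy hN hND hx
  refine ⟨m, u, N, hu, fun z hz => ?_⟩
  simpa using hcov hz

theorem exists_forall_dist_lt_mem_connectedComponentIn {Y : Type*} [MetricSpace Y]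
    [CompactSpace Y] [LocallyConnectedSpace Y] {ε : ℝ} (hε : 0 < ε) :
    ∃ δ > 0, ∀ x y : Y, dist x y < δ → y ∈ connectedComponentIn (Metric.ball x ε) x := by
  obtain ⟨δ, hδ, h⟩ := lebesgue_number_lemma_of_metric (isCompact_univ (X := Y))
    (c := fun z => connectedComponentIn (Metric.ball z (ε / 2)) z)
    (fun z => Metric.isOpen_ball.connectedComponentIn)
    (fun z _ => mem_iUnion.2 ⟨z, mem_connectedComponentIn (Metric.mem_ball_self (half_pos hε))⟩)
  refine ⟨δ, hδ, fun x y hxy => ?_⟩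
  obtain ⟨z, hz⟩ := h x (mem_univ x)
  have hx := hz (Metric.mem_ball_self hδ)
  have hy := hz (show y ∈ Metric.ball x δ by rwa [Metric.mem_ball, dist_comm])
  refine isPreconnected_connectedComponentIn.subset_connectedComponentIn hx ?_ hy
  refine (connectedComponentIn_subset _ _).trans fun w hw => ?_
  have hx' := connectedComponentIn_subset _ _ hx
  rw [Metric.mem_ball] at *
  linarith [dist_triangle_right w x z]

/-- A `δ`-chain of length `N` from `a` to `b` that is `δ`-dense in the space. -/
structure IsDenseChain {Y : Type*} [MetricSpace Y] (δ : ℝ) (a b : Y) (N : ℕ) (u : ℕ → Y) :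
    Prop where
  pos : 0 < N
  start : u 0 = a
  end_eq : ∀ i, N ≤ i → u i = b
  dist_lt : ∀ i, dist (u i) (u (i + 1)) < δ
  dense : ∀ z, ∃ i < N, dist z (u i) < δ

theorem exists_isDenseChain {Y : Type*} [MetricSpace Y] [CompactSpace Y] [ConnectedSpace Y]
    {δ : ℝ} (hδ : 0 < δ) (a b : Y) : ∃ N u, IsDenseChain δ a b N u := by
  obtain ⟨m, u, N, hu, hN⟩ := (isPreconnected_univ (α := Y)).exists_dense_isStepChain hδ
    (mem_univ a) (mem_univ b)
  refine ⟨m + 1, u, m.succ_pos, hu.start, fun i hi => hu.end_eq i (by omega), hu.dist_lt,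
    fun z => ?_⟩
  obtain ⟨w, hw, hzw⟩ := hN z (mem_univ z)
  obtain ⟨i, hi, rfl⟩ := hu.visits w hw
  exact ⟨i, by omega, hzw⟩

theorem IsDenseChain.refine {Y : Type*} [MetricSpace Y] [CompactSpace Y] {ε δ δ' : ℝ}
    (hδ' : 0 < δ')
    (hδ : ∀ x y : Y, dist x y < δ → y ∈ connectedComponentIn (Metric.ball x ε) x)
    {a b : Y} {N : ℕ} {u : ℕ → Y} (hu : IsDenseChain δ a b N u) :
    ∃ M u', 0 < M ∧ IsDenseChain δ' a b (N * M) u' ∧ ∀ k, dist (u' k) (u (k / M)) < ε := by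
  have hδ0 : 0 < δ := dist_nonneg.trans_lt (hu.dist_lt 0)
  have hself : ∀ i, u i ∈ connectedComponentIn (Metric.ball (u i) ε) (u i) := fun i =>
    hδ _ _ (by simpa using hδ0)
  have key : ∀ i, ∃ m v V, IsStepChain δ' (connectedComponentIn (Metric.ball (u i) ε) (u i))
      (u i) (u (i + 1)) V m v ∧
      ∀ z ∈ connectedComponentIn (Metric.ball (u i) ε) (u i), ∃ w ∈ V, dist z w < δ' := fun i =>
    isPreconnected_connectedComponentIn.exists_dense_isStepChain hδ' (hself i)
      (hδ _ _ (hu.dist_lt i))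
  choose m v V hv hV using key
  set M := (∑ i ∈ Finset.range N, m i) + 1 with hM
  have hmM : ∀ i < N, m i < M := fun i hi => by
    have := Finset.single_le_sum (f := m) (fun _ _ => Nat.zero_le _) (Finset.mem_range.2 hi)
    omega
  have hM0 : 0 < M := Nat.succ_pos _
  set w : ℕ → Y := fun k => if k / M < N then v (k / M) (k % M) else b with hw
  have hwv : ∀ i < N, ∀ j ≤ M, w (i * M + j) = v i j := by
    intro i hi j hj
    rcases hj.lt_or_eq with hj | rfl
    · have h1 : (i * M + j) / M = i := by
        rw [mul_comm, Nat.mul_add_div hM0, Nat.div_eq_of_lt hj, add_zero]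
      have h2 : (i * M + j) % M = j := by
        rw [mul_comm, Nat.mul_add_mod, Nat.mod_eq_of_lt hj]
      simp only [hw, h1, h2]
      rw [if_pos hi]
    · have h1 : (i * M + M) / M = i + 1 := by
        rw [← Nat.succ_mul]; exact Nat.mul_div_cancel _ hM0
      have h2 : (i * M + M) % M = 0 := by
        rw [← Nat.succ_mul]; exact Nat.mul_mod_left _ _
      simp only [hw, h1, h2]
      rw [(hv i).end_eq _ (hmM i hi).le]
      split_ifs with h3
      · rw [(hv (i + 1)).start]
      · rw [hu.end_eq _ (by omega)]
  have hwb : ∀ k, N * M ≤ k → w k = b := fun k hk => if_neg <| by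
    rw [not_lt]
    exact (Nat.le_div_iff_mul_le hM0).2 hk
  have hdecomp : ∀ k < N * M, ∃ i < N, ∃ j < M, k = i * M + j := fun k hk =>
    ⟨k / M, Nat.div_lt_of_lt_mul (by rwa [mul_comm]), k % M, Nat.mod_lt _ hM0,
      (Nat.div_add_mod' k M).symm⟩
  refine ⟨M, w, hM0, ⟨Nat.mul_pos hu.pos hM0, ?_, hwb, ?_, ?_⟩, ?_⟩
  · rw [← hu.start, ← (hv 0).start, ← hwv 0 hu.pos 0 (Nat.zero_le _)]
    simp
  · intro k
    rcases lt_or_ge k (N * M) with hk | hk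
    · obtain ⟨i, hi, j, hj, rfl⟩ := hdecomp k hk
      rw [add_assoc, hwv i hi j hj.le, hwv i hi (j + 1) hj]
      exact (hv i).dist_lt j
    · rw [hwb k hk, hwb (k + 1) (by omega), dist_self]
      exact hδ'
  · intro z
    obtain ⟨i, hi, hz⟩ := hu.dense z
    obtain ⟨y, hy, hzy⟩ := hV i z (hδ _ _ (by rwa [dist_comm]))
    obtain ⟨j, hj, rfl⟩ := (hv i).visits y hy
    have hjM : j < M := hj.trans_lt (hmM i hi)
    refine ⟨i * M + j, ?_, by rwa [hwv i hi j hjM.le]⟩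
    calc i * M + j < i * M + M := by omega
      _ = (i + 1) * M := (Nat.succ_mul _ _).symm
      _ ≤ N * M := Nat.mul_le_mul_right _ hi
  · intro k
    rcases lt_or_ge k (N * M) with hk | hk
    · have hkM : k / M < N := Nat.div_lt_of_lt_mul (by rwa [mul_comm])
      simp only [hw, if_pos hkM]
      exact Metric.mem_ball.1 (connectedComponentIn_subset _ _ ((hv (k / M)).mem _))
    · rw [hwb k hk, hu.end_eq _ ((Nat.le_div_iff_mul_le hM0).2 hk), dist_self]
      simpa using connectedComponentIn_subset _ _ (hself 0)

/-- **Hahn–Mazurkiewicz**: a Peano continuum is the image of an interval under a continuous map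
with prescribed values at the ends of the interval. -/
theorem exists_continuous_surjOn_Icc {Y : Type*} [MetricSpace Y] [CompactSpace Y]
    [ConnectedSpace Y] [LocallyConnectedSpace Y] (a b : Y) :
    ∃ γ : ℝ → Y, Continuous γ ∧ (∀ t ≤ 0, γ t = a) ∧ (∀ t ≥ 1, γ t = b) ∧
      SurjOn γ (Icc 0 1) univ := by
  have hε : ∀ n : ℕ, (0 : ℝ) < (1 / 2) ^ n := fun n => by positivity
  choose δ₀ hδ₀ hcomp₀ using fun n =>
    exists_forall_dist_lt_mem_connectedComponentIn (Y := Y) (hε n)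
  set δ : ℕ → ℝ := fun n => min (δ₀ n) ((1 / 2) ^ n) with hδ_def
  have hδ : ∀ n, 0 < δ n := fun n => lt_min (hδ₀ n) (hε n)
  have hcomp : ∀ n, ∀ x y : Y, dist x y < δ n →
      y ∈ connectedComponentIn (Metric.ball x ((1 / 2) ^ n)) x := fun n x y h =>
    hcomp₀ n x y (h.trans_le (min_le_left _ _))
  have hstep : ∀ (n : ℕ) (s : ℕ × (ℕ → Y)), ∃ s' : ℕ × (ℕ → Y), IsDenseChain (δ n) a b s.1 s.2 →
      IsDenseChain (δ (n + 1)) a b s'.1 s'.2 ∧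
      ∃ M, 0 < M ∧ s'.1 = s.1 * M ∧ ∀ k, dist (s'.2 k) (s.2 (k / M)) < (1 / 2) ^ n := by
    intro n s
    by_cases hs : IsDenseChain (δ n) a b s.1 s.2
    · obtain ⟨M, u', hM, hu', hd⟩ := hs.refine (hδ (n + 1)) (hcomp n)
      exact ⟨(s.1 * M, u'), fun _ => ⟨hu', M, hM, rfl, hd⟩⟩
    · exact ⟨s, fun h => absurd h hs⟩
  choose next hnext using hstep
  obtain ⟨N₀, u₀, hu₀⟩ := exists_isDenseChain (hδ 0) a b
  let s : ℕ → ℕ × (ℕ → Y) := fun n => Nat.rec (N₀, u₀) (fun n p => next n p) n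
  have hs : ∀ n, IsDenseChain (δ n) a b (s n).1 (s n).2 := by
    intro n
    induction n with
    | zero => exact hu₀
    | succ n ih => exact (hnext n (s n) ih).1
  have hss : ∀ n, ∃ M, 0 < M ∧ (s (n + 1)).1 = (s n).1 * M ∧
      ∀ k, dist ((s (n + 1)).2 k) ((s n).2 (k / M)) < (1 / 2) ^ n := fun n =>
    (hnext n (s n) (hs n)).2
  let γ : ℕ → ℝ → Y := fun n t => (s n).2 ⌊t * (s n).1⌋₊
  have hγ_succ : ∀ n t, dist (γ n t) (γ (n + 1) t) ≤ 1 / 2 ^ n := by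
    intro n t
    obtain ⟨M, hM, hN, hd⟩ := hss n
    have hfl : ⌊t * (s (n + 1)).1⌋₊ / M = ⌊t * (s n).1⌋₊ := by
      rw [← Nat.floor_div_natCast, hN]
      congr 1
      push_cast
      field_simp
    have := hd ⌊t * (s (n + 1)).1⌋₊
    rw [hfl] at this
    rw [dist_comm]
    simpa using this.le
  have hcau : ∀ t, ∃ y, Tendsto (fun n => γ n t) atTop (𝓝 y) := fun t =>
    cauchySeq_tendsto_of_complete
      (cauchySeq_of_le_geometric_two (C := 2) (fun n => by simpa using hγ_succ n t))
  choose Γ hΓ using hcau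
  have hΓdist : ∀ n t, dist (γ n t) (Γ t) ≤ 2 * (1 / 2) ^ n := fun n t => by
    have := dist_le_of_le_geometric_two_of_tendsto (C := 2) (fun n => by simpa using hγ_succ n t)
      (hΓ t) n
    simpa [div_eq_mul_inv] using this
  have hsmall : ∀ ε > (0 : ℝ), ∃ n : ℕ, 5 * (1 / 2 : ℝ) ^ n < ε := by
    intro ε hε
    obtain ⟨n, hn⟩ := exists_pow_lt_of_lt_one (show 0 < ε / 5 by positivity)
      (show (1 / 2 : ℝ) < 1 by norm_num)
    exact ⟨n, by linarith⟩
  have hγ_near : ∀ n t t', |t - t'| < 1 / ((s n).1 : ℝ) → dist (γ n t) (γ n t') ≤ (1 / 2) ^ n := by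
    intro n
    have hN : (0 : ℝ) < (s n).1 := by exact_mod_cast (hs n).pos
    have aux : ∀ t t', t ≤ t' → |t - t'| < 1 / ((s n).1 : ℝ) →
        dist (γ n t) (γ n t') ≤ (1 / 2) ^ n := by
      intro t t' htt h
      have h1 : ⌊t * (s n).1⌋₊ ≤ ⌊t' * (s n).1⌋₊ := Nat.floor_mono (by gcongr)
      have h2 : ⌊t' * (s n).1⌋₊ ≤ ⌊t * (s n).1⌋₊ + 1 := by
        rcases lt_or_ge t' 0 with ht' | ht'
        · rw [Nat.floor_of_nonpos (by nlinarith)]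
          omega
        · have h3 := Nat.floor_le (mul_nonneg ht' hN.le)
          have h4 := Nat.lt_floor_add_one (t * (s n).1)
          rw [abs_lt] at h
          rw [← Nat.lt_succ_iff]
          have h6 : t' * (s n).1 - t * (s n).1 < 1 := by
            have : -(1 / ((s n).1 : ℝ)) * (s n).1 < (t - t') * (s n).1 :=
              mul_lt_mul_of_pos_right h.1 hN
            rw [neg_mul, one_div, inv_mul_cancel₀ hN.ne'] at this
            linarith
          exact_mod_cast (show (⌊t' * (s n).1⌋₊ : ℝ) < (⌊t * (s n).1⌋₊ : ℝ) + 1 + 1 by linarith)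
      rcases (show ⌊t' * (s n).1⌋₊ = ⌊t * (s n).1⌋₊ ∨ ⌊t' * (s n).1⌋₊ = ⌊t * (s n).1⌋₊ + 1 by
        omega) with h3 | h3
      · simp only [γ, h3, dist_self]
        positivity
      · simp only [γ, h3]
        exact ((hs n).dist_lt _).le.trans (min_le_right _ _)
    intro t t' h
    rcases le_total t t' with htt | htt
    · exact aux t t' htt h
    · rw [dist_comm]
      exact aux t' t htt (by rwa [abs_sub_comm])
  have hcont : Continuous Γ := by
    refine Metric.continuous_iff.2 fun t ε hε => ?_
    obtain ⟨n, hn⟩ := hsmall ε hε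
    have hN : (0 : ℝ) < (s n).1 := by exact_mod_cast (hs n).pos
    refine ⟨1 / (s n).1, by positivity, fun t' ht' => ?_⟩
    have h1 := hγ_near n t' t ht'
    have h2 := hΓdist n t
    have h3 := hΓdist n t'
    rw [dist_comm] at h3
    linarith [dist_triangle4 (Γ t') (γ n t') (γ n t) (Γ t)]
  refine ⟨Γ, hcont, fun t ht => ?_, fun t ht => ?_, fun z _ => ?_⟩
  · refine tendsto_nhds_unique (hΓ t) (tendsto_const_nhds.congr fun n => ?_)
    simp only [γ]
    rw [Nat.floor_of_nonpos (mul_nonpos_of_nonpos_of_nonneg ht (Nat.cast_nonneg _)), (hs n).start]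
  · refine tendsto_nhds_unique (hΓ t) (tendsto_const_nhds.congr fun n => ?_)
    simp only [γ]
    rw [(hs n).end_eq]
    exact Nat.le_floor (le_mul_of_one_le_left (Nat.cast_nonneg _) ht)
  · have hcl : IsClosed (Γ '' Icc 0 1) := (isCompact_Icc.image hcont).isClosed
    change z ∈ Γ '' Icc 0 1
    rw [← hcl.closure_eq]
    refine Metric.mem_closure_iff.2 fun ε hε => ?_
    obtain ⟨n, hn⟩ := hsmall ε hε
    have hN : (0 : ℝ) < (s n).1 := by exact_mod_cast (hs n).pos
    obtain ⟨i, hi, hz⟩ := (hs n).dense z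
    have hi' : (i : ℝ) ≤ (s n).1 := by exact_mod_cast hi.le
    refine ⟨_, mem_image_of_mem Γ (show (i : ℝ) / (s n).1 ∈ Icc (0 : ℝ) 1 from
      ⟨by positivity, (div_le_one hN).2 hi'⟩), ?_⟩
    have h1 : γ n ((i : ℝ) / (s n).1) = (s n).2 i := by
      simp only [γ]
      rw [div_mul_cancel₀ _ hN.ne', Nat.floor_natCast]
    have h2 := hΓdist n ((i : ℝ) / (s n).1)
    have h3 : dist z ((s n).2 i) < (1 / 2) ^ n := hz.trans_le (min_le_right _ _)
    rw [h1] at h2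
    linarith [dist_triangle z ((s n).2 i) (Γ ((i : ℝ) / (s n).1)),
      show (0 : ℝ) < (1 / 2) ^ n by positivity]

/-! ### Curves that cross a chain of cut points in order -/

/-- The points of a fiber `{g = t}` that are limits of points with `g < t` form a subsingleton, if
the fiber can be cut off by single points. -/
theorem subsingleton_fiber_inter_closure {Y : Type*} [TopologicalSpace Y] [T2Space Y]
    [LocallyConnectedSpace Y] {g : Y → ℝ} {t : ℝ}
    (hcut : ∀ s < t, ∃ w, ∀ C : Set Y, IsPreconnected C → ∀ z ∈ C, ∀ z' ∈ C, g z ≤ s → g z' = t →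
      w ∈ C) :
    ({y | g y = t} ∩ closure {y | g y < t}).Subsingleton := by
  rintro x ⟨hxt, hx⟩ y ⟨hyt, hy⟩
  by_contra hxy
  obtain ⟨u, v, hu, hv, hxu, hyv, huv⟩ := t2_separation hxy
  have key : ∀ (u : Set Y) (x : Y), IsOpen u → x ∈ u → x ∈ closure {y | g y < t} →
      ∃ z ∈ connectedComponentIn u x, g z < t := fun u x hu hxu hx => by
    obtain ⟨z, hz, hz'⟩ := mem_closure_iff.1 hx _ hu.connectedComponentIn
      (mem_connectedComponentIn hxu)
    exact ⟨z, hz, hz'⟩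
  obtain ⟨z, hz, hzt⟩ := key u x hu hxu hx
  obtain ⟨z', hz', hzt'⟩ := key v y hv hyv hy
  obtain ⟨w, hw⟩ := hcut (max (g z) (g z')) (max_lt hzt hzt')
  exact disjoint_left.1 huv
    (connectedComponentIn_subset _ _ (hw _ isPreconnected_connectedComponentIn z hz x
      (mem_connectedComponentIn hxu) (le_max_left _ _) hxt))
    (connectedComponentIn_subset _ _ (hw _ isPreconnected_connectedComponentIn z' hz' y
      (mem_connectedComponentIn hyv) (le_max_right _ _) hyt))

theorem exists_continuous_collapse_lt {Y : Type*} [TopologicalSpace Y] [T2Space Y]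
    [PreconnectedSpace Y] [LocallyConnectedSpace Y] {g : Y → ℝ} (hg : Continuous g) {t : ℝ}
    (hlt : ∃ y, g y < t) (hge : ∃ y, t ≤ g y)
    (hcut : ∀ s < t, ∃ w, ∀ C : Set Y, IsPreconnected C → ∀ z ∈ C, ∀ z' ∈ C, g z ≤ s → g z' = t →
      w ∈ C) :
    ∃ a, g a = t ∧ Continuous (fun y => if g y < t then a else y) := by
  have hle : closure {y | g y < t} ⊆ {y | g y ≤ t} := closure_lt_subset_le hg continuous_const
  have hopen : IsOpen {y | g y < t} := isOpen_lt hg continuous_const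
  have hne : ({y | g y = t} ∩ closure {y | g y < t}).Nonempty := by
    by_contra hne
    rw [not_nonempty_iff_eq_empty] at hne
    have hclosed : IsClosed {y | g y < t} := by
      refine isClosed_of_closure_subset fun y hy => ?_
      exact lt_of_le_of_ne (show g y ≤ t from hle hy) fun h => hne.subset ⟨h, hy⟩
    have := IsClopen.eq_univ ⟨hclosed, hopen⟩ hlt
    obtain ⟨y, hy⟩ := hge
    exact hy.not_gt (this.symm.subset (mem_univ y))
  obtain ⟨a, hat, ha⟩ := hne
  refine ⟨a, hat, Continuous.if ?_ continuous_const continuous_id⟩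
  intro y hy
  rw [hopen.frontier_eq] at hy
  exact subsingleton_fiber_inter_closure hcut ⟨hat, ha⟩
    ⟨le_antisymm (hle hy.1) (not_lt.1 hy.2), hy.1⟩

/-- A connected, locally connected space retracts onto each intermediate fiber of a function whose
fibers are points outside a countable set of values. -/
theorem exists_fiber_retraction {Y : Type*} [TopologicalSpace Y] [T2Space Y]
    [PreconnectedSpace Y] [LocallyConnectedSpace Y] {g : Y → ℝ} (hg : Continuous g) {T : Set ℝ}
    (hT : T.Countable) (hinj : ∀ y y', g y = g y' → g y ∉ T → y = y') {t : ℝ}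
    (hlt : ∃ y, g y < t) (hgt : ∃ y, t < g y) :
    ∃ (r : Y → Y) (a b : Y), Continuous r ∧ (∀ y, g (r y) = t) ∧ (∀ y, g y < t → r y = a) ∧
      (∀ y, g y = t → r y = y) ∧ ∀ y, t < g y → r y = b := by
  obtain ⟨y₀, hy₀⟩ := hlt
  obtain ⟨y₁, hy₁⟩ := hgt
  have hw : ∀ s s', s < s' → g y₀ ≤ s → s' ≤ g y₁ → ∃ w, s < g w ∧ g w < s' ∧ g w ∉ T := by
    intro s s' hss h0 h1
    obtain ⟨c, hcT, hsc, hcs⟩ := (hT.dense_compl ℝ).exists_between hss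
    obtain ⟨w, rfl⟩ := mem_range_of_exists_le_of_exists_ge hg
      ⟨y₀, h0.trans hsc.le⟩ ⟨y₁, hcs.le.trans h1⟩
    exact ⟨w, hsc, hcs, hcT⟩
  have hmeet : ∀ C : Set Y, IsPreconnected C → ∀ z ∈ C, ∀ z' ∈ C, ∀ w, g w ∉ T → g z ≤ g w →
      g w ≤ g z' → w ∈ C := by
    intro C hC z hz z' hz' w hwT h1 h2
    obtain ⟨c, hcC, hc⟩ := hC.intermediate_value hz hz' hg.continuousOn ⟨h1, h2⟩
    rwa [← hinj c w hc (hc ▸ hwT)]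
  obtain ⟨a, hat, ha⟩ := exists_continuous_collapse_lt hg ⟨y₀, hy₀⟩ ⟨y₁, hy₁.le⟩ (by
    intro s hs
    obtain ⟨w, hsw, hwt, hwT⟩ := hw (max s (g y₀)) t (max_lt hs hy₀) (le_max_right _ _) hy₁.le
    refine ⟨w, fun C hC z hz z' hz' hzs hzt => hmeet C hC z hz z' hz' w hwT ?_ ?_⟩
    · exact hzs.trans ((le_max_left _ _).trans hsw.le)
    · exact hwt.le.trans hzt.ge)
  obtain ⟨b, hbt, hb⟩ := exists_continuous_collapse_lt (g := fun y => -g y) (t := -t) hg.neg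
    ⟨y₁, neg_lt_neg hy₁⟩ ⟨y₀, neg_le_neg hy₀.le⟩ (by
    intro s hs
    obtain ⟨w, htw, hws, hwT⟩ := hw t (min (-s) (g y₁)) (lt_min (by linarith) hy₁) hy₀.le
      (min_le_right _ _)
    refine ⟨w, fun C hC z hz z' hz' hzs hzt => hmeet C hC z' hz' z hz w hwT ?_ ?_⟩
    · linarith
    · linarith [min_le_left (-s) (g y₁)])
  rw [neg_inj] at hbt
  refine ⟨_, a, b, ha.comp hb, ?_, ?_, ?_, ?_⟩ <;> intro y
  · simp only [Function.comp, neg_lt_neg_iff]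
    rcases lt_trichotomy (g y) t with h | h | h
    · simp [h, h.not_gt, hat]
    · simp [h]
    · simp [h, hbt]
  · intro h
    simp [h, h.not_gt]
  · intro h
    simp [h]
  · intro h
    simp [h, hbt]

/-- A monotone `1`-Lipschitz function `h` that is constant on an interval of positive length
over every point of a countable set, and otherwise increases at unit speed. -/
theorem exists_lipschitz_with_plateaus {T : Set ℝ} (hT : T.Countable) {δ : ℝ} (hδ : 0 < δ) :
    ∃ h σ w : ℝ → ℝ, LipschitzWith 1 h ∧ (∀ s, h s ≤ s) ∧ (∀ s, s - δ ≤ h s) ∧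
      (∀ t, h (σ t) = t) ∧ (∀ t, 0 < w t) ∧ (∀ s t, h s < t → s ≤ σ t) ∧
      (∀ t ∈ T, ∀ s, t < h s → σ t + w t ≤ s) ∧
      ∀ t ∈ T, ∀ s, σ t ≤ s → s ≤ σ t + w t → h s = t := by
  obtain ⟨w, hw, c, hc, hcδ⟩ := hT.exists_pos_hasSum_le hδ
  have hsum : ∀ t : ℝ, Summable fun k : T => if (k : ℝ) < t then w k else 0 := fun t =>
    hc.summable.of_nonneg_of_le (fun k => by split_ifs; exacts [(hw _).le, le_rfl])
      (fun k => by split_ifs; exacts [le_rfl, (hw _).le])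
  set σ : ℝ → ℝ := fun t => t + ∑' k : T, if (k : ℝ) < t then w k else 0 with hσ
  have hσ_le : ∀ t, t ≤ σ t := fun t =>
    le_add_of_nonneg_right (tsum_nonneg fun k => by split_ifs; exacts [(hw _).le, le_rfl])
  have hle_σ : ∀ t, σ t ≤ t + δ := fun t => by
    refine add_le_add_right (le_trans ?_ hcδ) t
    rw [← hc.tsum_eq]
    exact (hsum t).tsum_le_tsum (fun k => by split_ifs; exacts [le_rfl, (hw _).le]) hc.summable
  have hmono : ∀ t t', t ≤ t' → t' - t ≤ σ t' - σ t := by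
    intro t t' htt
    have := (hsum t).tsum_le_tsum (g := fun k : T => if (k : ℝ) < t' then w k else 0) (fun k => by
      by_cases h : (k : ℝ) < t
      · simp [h, h.trans_le htt]
      · simp only [h, if_false]
        split_ifs; exacts [(hw _).le, le_rfl]) (hsum t')
    simp only [hσ]
    linarith
  have hjump : ∀ k ∈ T, ∀ t, k < t → σ k + w k + (t - k) ≤ σ t := by
    intro k hk t hkt
    have h1 : HasSum (fun j : T => (if (j : ℝ) < k then w j else 0) + if j = ⟨k, hk⟩ then w k else 0)
        ((∑' j : T, if (j : ℝ) < k then w j else 0) + w k) :=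
      (hsum k).hasSum.add (hasSum_ite_eq _ _)
    have := hasSum_le (fun j => ?_) h1 (hsum t).hasSum
    · simp only [hσ]
      linarith
    · by_cases hj : j = ⟨k, hk⟩
      · subst hj
        simp [hkt]
      · simp only [hj, if_false, add_zero]
        by_cases h : (j : ℝ) < k
        · simp [h, h.trans hkt]
        · simp only [h, if_false]
          split_ifs; exacts [(hw _).le, le_rfl]
  set h : ℝ → ℝ := fun s => sSup {t | σ t ≤ s} with hh
  have hbdd : ∀ s, BddAbove {t | σ t ≤ s} := fun s => ⟨s, fun t ht => (hσ_le t).trans ht⟩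
  have hmem : ∀ s, s - δ ∈ {t | σ t ≤ s} := fun s => (hle_σ _).trans (by linarith)
  have hle_h : ∀ s t, σ t ≤ s → t ≤ h s := fun s t ht => le_csSup (hbdd s) ht
  have hh_lt : ∀ s t, t < h s → ∃ t' > t, σ t' ≤ s := fun s t ht => by
    obtain ⟨t', ht', htt'⟩ := exists_lt_of_lt_csSup ⟨_, hmem s⟩ ht
    exact ⟨t', htt', ht'⟩
  have hσ_strict : ∀ t s, σ t ≤ s → (∀ t' > t, s < σ t') → h s = t := fun t s h1 h2 => by
    refine le_antisymm (not_lt.1 fun hlt => ?_) (hle_h s t h1)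
    obtain ⟨t', ht', hs⟩ := hh_lt s t hlt
    exact (h2 t' ht').not_ge hs
  refine ⟨h, σ, w, ?_, fun s => ?_, fun s => hle_h _ _ (hmem s), fun t => ?_, hw, ?_, ?_, ?_⟩
  · refine LipschitzWith.of_le_add fun s s' => ?_
    refine csSup_le ⟨_, hmem s⟩ fun t ht => ?_
    rcases le_total s s' with hss | hss
    · exact (hle_h s' t (le_trans ht hss)).trans (le_add_of_nonneg_right dist_nonneg)
    · rw [Real.dist_eq, abs_of_nonneg (sub_nonneg.2 hss), ← sub_le_iff_le_add]
      refine hle_h _ _ ?_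
      have := hmono (t - (s - s')) t (by linarith)
      have ht' : σ t ≤ s := ht
      linarith
  · exact csSup_le ⟨_, hmem s⟩ fun t ht => (hσ_le t).trans ht
  · refine hσ_strict t _ le_rfl fun t' ht' => ?_
    linarith [hmono t t' (le_of_lt ht')]
  · intro s t hst
    by_contra hlt
    exact (hle_h s t (not_le.1 hlt).le).not_gt hst
  · intro t ht s hts
    obtain ⟨t', htt', hs⟩ := hh_lt s t hts
    linarith [hjump t ht t' htt']
  · intro t ht s h1 h2
    refine hσ_strict t s h1 fun t' ht' => ?_
    linarith [hjump t ht t' ht']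

/-- If the fibers of `g : Y → [0, 1]` over all but countably many values are points, then a Peano
continuum `Y` is covered by a curve along which `g` is `1`-Lipschitz, in time as close
to `1` as desired. -/
theorem exists_lipschitz_covering_curve {Y : Type*} [MetricSpace Y] [CompactSpace Y]
    [ConnectedSpace Y] [LocallyConnectedSpace Y] {g : Y → ℝ} (hg : Continuous g) {c₀ c₁ : Y}
    (hc₀ : g c₀ = 0) (hc₁ : g c₁ = 1) (hg01 : ∀ y, g y ∈ Icc (0 : ℝ) 1) {T : Set ℝ}
    (hT : T.Countable) (hT01 : T ⊆ Ioo 0 1) (hinj : ∀ y y', g y = g y' → g y ∉ T → y = y')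
    {δ : ℝ} (hδ : 0 < δ) :
    ∃ γ : ℝ → Y, Continuous γ ∧ LipschitzWith 1 (g ∘ γ) ∧ (∀ s ≤ 0, γ s = c₀) ∧
      (∀ s ≥ 1 + δ, γ s = c₁) ∧ SurjOn γ (Icc 0 (1 + δ)) univ := by
  obtain ⟨h, σ, w, hlip, hle, hge, hσ, hw, hσ_ge, hσ_le, hplateau⟩ :=
    exists_lipschitz_with_plateaus hT hδ
  obtain ⟨β, hβ, hβ0, hβ1, hβsurj⟩ := exists_continuous_surjOn_Icc c₀ c₁
  choose r a b hr hgr hra hrr hrb using fun t : T => exists_fiber_retraction hg hT hinj (t := t)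
    ⟨c₀, hc₀ ▸ (hT01 t.2).1⟩ ⟨c₁, hc₁ ▸ (hT01 t.2).2⟩
  have hsurj : ∀ t ∈ Icc (0 : ℝ) 1, ∃ y, g y = t := fun t ht =>
    mem_range_of_exists_le_of_exists_ge hg ⟨c₀, hc₀ ▸ ht.1⟩ ⟨c₁, hc₁ ▸ ht.2⟩
  set k : ℝ → ℝ := fun s => max 0 (min 1 (h s)) with hk
  have hk01 : ∀ s, k s ∈ Icc (0 : ℝ) 1 := fun s =>
    ⟨le_max_left _ _, max_le zero_le_one (min_le_left _ _)⟩
  have hklip : LipschitzWith 1 k := (hlip.const_min 1).const_max 0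
  choose pt hpt using fun s => hsurj (k s) (hk01 s)
  classical
  set γ : ℝ → Y := fun s =>
    if hs : k s ∈ T then r ⟨k s, hs⟩ (β ((s - σ (k s)) / w (k s))) else pt s with hγ
  have hgγ : ∀ s, g (γ s) = k s := by
    intro s
    simp only [hγ]
    split_ifs with hs
    · exact hgr _ _
    · exact hpt s
  have hrγ : ∀ (t : T) s, r t (γ s) = r t (β ((s - σ t) / w t)) := by
    intro t s
    have ht := hT01 t.2
    rcases lt_trichotomy (k s) t with hs | hs | hs
    · have hht : h s < t := by
        simp only [hk, max_lt_iff, min_lt_iff] at hs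
        rcases hs.2 with h1 | h1
        · exact absurd ht.2 h1.not_gt
        · exact h1
      rw [hra t _ (by rwa [hgγ]), hβ0 _ (div_nonpos_of_nonpos_of_nonneg
        (sub_nonpos.2 (hσ_ge s t hht)) (hw t).le), hra t _ (hc₀ ▸ ht.1)]
    · have hsT : k s ∈ T := hs ▸ t.2
      simp only [hγ, dif_pos hsT, hs]
      exact hrr t _ (hgr t _)
    · have hht : t < h s := by
        simp only [hk, lt_max_iff, lt_min_iff] at hs
        rcases hs with h1 | h1
        · exact absurd ht.1 h1.not_gt
        · exact h1.2
      rw [hrb t _ (by rwa [hgγ]), hβ1 _ ((one_le_div (hw t)).2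
        (by linarith [hσ_le t t.2 s hht])), hrb t _ (hc₁ ▸ ht.2)]
  have hemb : IsInducing fun y => (g y, fun t : T => r t y) := by
    refine (Continuous.isClosedEmbedding (by fun_prop) fun y y' hyy => ?_).isInducing
    simp only [Prod.mk.injEq] at hyy
    by_cases hy : g y ∈ T
    · have := congrFun hyy.2 ⟨g y, hy⟩
      rwa [hrr _ _ rfl, hrr _ _ hyy.1.symm] at this
    · exact hinj y y' hyy.1 hy
  have hγc : Continuous γ := by
    rw [hemb.continuous_iff]
    have : ((fun y => (g y, fun t : T => r t y)) ∘ γ) =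
        fun s => (k s, fun t : T => r t (β ((s - σ t) / w t))) := by
      funext s
      simp only [Function.comp, hgγ, hrγ]
    rw [this]
    have := hklip.continuous
    fun_prop
  have hγ_eq : ∀ s y, g y ∉ T → k s = g y → γ s = y := fun s y hy hs => by
    refine hinj _ _ ((hgγ s).trans hs) ?_
    rwa [hgγ, hs]
  refine ⟨γ, hγc, ?_, fun s hs => ?_, fun s hs => ?_, fun y _ => ?_⟩
  · rwa [show g ∘ γ = k from funext hgγ]
  · refine hγ_eq s c₀ (hc₀ ▸ fun h0 => lt_irrefl _ (hT01 h0).1) ?_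
    rw [hc₀]
    exact max_eq_left ((min_le_right _ _).trans ((hle s).trans hs))
  · refine hγ_eq s c₁ (hc₁ ▸ fun h1 => lt_irrefl _ (hT01 h1).2) ?_
    have : 1 ≤ h s := le_trans (by linarith) (hge s)
    simp [hk, hc₁, this]
  · have hkh : ∀ s, h s = g y → k s = g y := fun s hs => by
      simp only [hk, hs]
      rw [min_eq_right (hg01 y).2, max_eq_right (hg01 y).1]
    have hdom : ∀ s, h s = g y → s ∈ Icc 0 (1 + δ) := fun s hs =>
      ⟨(hg01 y).1.trans (hs ▸ hle s), by linarith [hge s, (hg01 y).2]⟩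
    by_cases hy : g y ∈ T
    · obtain ⟨u, hu, huy⟩ := hβsurj (mem_univ y)
      have hs : h (σ (g y) + u * w (g y)) = g y := hplateau _ hy _
        (le_add_of_nonneg_right (mul_nonneg hu.1 (hw _).le))
        (add_le_add_right (mul_le_of_le_one_left (hw _).le hu.2) _)
      refine ⟨_, hdom _ hs, ?_⟩
      have h1 := hrγ ⟨g y, hy⟩ (σ (g y) + u * w (g y))
      rw [hrr _ _ ((hgγ _).trans (hkh _ hs))] at h1
      rw [h1]
      dsimp only
      rw [add_sub_cancel_left, mul_div_cancel_right₀ _ (hw _).ne', huy, hrr _ _ rfl]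
    · exact ⟨_, hdom _ (hσ _), hγ_eq _ y hy (hkh _ (hσ _))⟩

/-! ### Subspaces with finite boundary -/

theorem IsPreconnected.inter_of_boundary_subset_singleton {X : Type*} [TopologicalSpace X]
    {C S F : Set X} (hC : IsPreconnected C) (hS : IsClosed S) (hSF : IsOpen (S \ F)) {x : X}
    (hxC : x ∈ C) (hxS : x ∈ S) (hCF : C ∩ F ⊆ {x}) : IsPreconnected (C ∩ S) := by
  have key : ∀ u v : Set X, IsOpen u → IsOpen v → C ∩ S ⊆ u ∪ v → C ∩ S ∩ (u ∩ v) = ∅ → x ∈ u →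
      C ∩ S ⊆ u := by
    intro u v hu hv huv hdisj hxu
    have hxv : x ∉ v := fun hxv => hdisj.subset ⟨⟨hxC, hxS⟩, hxu, hxv⟩
    have := (isPreconnected_iff_subset_of_disjoint.1 hC) (u ∪ Sᶜ) (v ∩ (S \ F))
      (hu.union hS.isOpen_compl) (hv.inter hSF) ?_ ?_
    · rcases this with h | h
      · rintro c ⟨hcC, hcS⟩
        exact (h hcC).resolve_right fun h' => h' hcS
      · exact absurd (h hxC).1 hxv
    · intro c hc
      by_cases hcS : c ∈ S
      · rcases huv ⟨hc, hcS⟩ with h | h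
        · exact Or.inl (Or.inl h)
        · refine Or.inr ⟨h, hcS, fun hcF => hxv ?_⟩
          rwa [← mem_singleton_iff.1 (hCF ⟨hc, hcF⟩)]
      · exact Or.inl (Or.inr hcS)
    · refine eq_empty_of_forall_notMem ?_
      rintro c ⟨hc, h | h, hcv, hcS, -⟩
      · exact hdisj.subset ⟨⟨hc, hcS⟩, h, hcv⟩
      · exact h hcS
  refine isPreconnected_iff_subset_of_disjoint.2 fun u v hu hv huv hdisj => ?_
  rcases huv ⟨hxC, hxS⟩ with h | h
  · exact Or.inl (key u v hu hv huv hdisj h)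
  · exact Or.inr (key v u hv hu (by rwa [union_comm]) (by rwa [inter_comm v u]) h)

theorem IsClosed.locallyConnectedSpace_of_finite_boundary {X : Type*} [TopologicalSpace X]
    [T1Space X] [LocallyConnectedSpace X] {S F : Set X} (hS : IsClosed S) (hF : F.Finite)
    (hSF : IsOpen (S \ F)) : LocallyConnectedSpace S := by
  rw [locallyConnectedSpace_iff_connected_subsets]
  intro x U hU
  obtain ⟨U', hU', hUU'⟩ := mem_nhds_subtype _ _ _ |>.1 hU
  have hmem : U' ∩ (F \ {(x : X)})ᶜ ∈ 𝓝 (x : X) :=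
    inter_mem hU' ((hF.subset sdiff_subset).isClosed.isOpen_compl.mem_nhds (by simp))
  refine ⟨(↑) ⁻¹' connectedComponentIn (U' ∩ (F \ {(x : X)})ᶜ) x,
    continuous_subtype_val.continuousAt.preimage_mem_nhds (connectedComponentIn_mem_nhds hmem),
    ?_, fun y hy => hUU' (connectedComponentIn_subset _ _ hy).1⟩
  rw [← Topology.IsInducing.subtypeVal.isPreconnected_image, Subtype.image_preimage_coe, inter_comm]
  refine isPreconnected_connectedComponentIn.inter_of_boundary_subset_singleton hS hSF
    (mem_connectedComponentIn (mem_of_mem_nhds hmem)) x.2 fun y hy => ?_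
  by_contra hyx
  exact (connectedComponentIn_subset _ _ hy.1).2 ⟨hy.2, hyx⟩

theorem exists_continuous_surjOn_connectedComponent {Z : Type*} [MetricSpace Z] [CompactSpace Z]
    [LocallyConnectedSpace Z] (c : Z) :
    ∃ γ : ℝ → Z, Continuous γ ∧ (∀ t ≤ 0, γ t = c) ∧ (∀ t ≥ 1, γ t = c) ∧
      SurjOn γ (Icc 0 1) (connectedComponent c) := by
  have : LocallyConnectedSpace (connectedComponent c) :=
    isOpen_connectedComponent.locallyConnectedSpace
  have : CompactSpace (connectedComponent c) :=
    isCompact_iff_compactSpace.1 isClosed_connectedComponent.isCompact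
  have : ConnectedSpace (connectedComponent c) := Subtype.connectedSpace isConnected_connectedComponent
  obtain ⟨γ, hγ, h0, h1, hs⟩ := exists_continuous_surjOn_Icc
    (⟨c, mem_connectedComponent⟩ : connectedComponent c) ⟨c, mem_connectedComponent⟩
  refine ⟨fun t => γ t, by fun_prop, fun t ht => congrArg Subtype.val (h0 t ht),
    fun t ht => congrArg Subtype.val (h1 t ht),
    fun z hz => ?_⟩
  obtain ⟨t, ht, htz⟩ := hs (mem_univ ⟨z, hz⟩)
  exact ⟨t, ht, congrArg Subtype.val htz⟩

/-- Every component of a closed set with finite boundary in a connected space meets the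
boundary. -/
theorem IsClosed.exists_mem_connectedComponent_of_boundary {X : Type*} [TopologicalSpace X]
    [PreconnectedSpace X] {S F : Set X} (hS : IsClosed S) (hSF : IsOpen (S \ F)) (hF : F.Nonempty)
    [LocallyConnectedSpace S] (z : S) : ∃ c : S, (c : X) ∈ F ∧ z ∈ connectedComponent c := by
  by_contra! hcon
  have hdisj : ((↑) '' connectedComponent z : Set X) ⊆ S \ F := by
    rintro _ ⟨y, hy, rfl⟩
    refine ⟨y.2, fun hyF => hcon y hyF ?_⟩
    rw [connectedComponent_eq hy |>.symm]
    exact mem_connectedComponent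
  have hclosed : IsClosed ((↑) '' connectedComponent z : Set X) :=
    hS.isClosedEmbedding_subtypeVal.isClosedMap _ isClosed_connectedComponent
  have hopen : IsOpen ((↑) '' connectedComponent z : Set X) := by
    obtain ⟨u, hu, huz⟩ := isOpen_induced_iff.1 (isOpen_connectedComponent (x := z))
    have : ((↑) '' connectedComponent z : Set X) = u ∩ (S \ F) := by
      refine Subset.antisymm (subset_inter ?_ hdisj) ?_
      · rw [← huz]
        exact image_preimage_subset _ _
      · rintro y ⟨hyu, hyS, -⟩
        exact ⟨⟨y, hyS⟩, huz ▸ hyu, rfl⟩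
    rw [this]
    exact hu.inter hSF
  obtain ⟨c, hc⟩ := hF
  exact (hdisj (IsClopen.eq_univ ⟨hclosed, hopen⟩ ⟨z, z, mem_connectedComponent, rfl⟩ ▸
    mem_univ c)).2 hc

/-! ### Assembling the three maps -/

theorem topContractive_of_factor {X : Type*} [MetricSpace X] {F : Set (X → X)} {G : X → ℝ} {q : ℝ}
    (hq0 : 0 ≤ q) (hq1 : q < 1) (hG : ∀ x y, |G x - G y| ≤ 1)
    (hF : ∀ f ∈ F, ∀ x y, |G (f x) - G (f y)| ≤ q * |G x - G y|)
    (hu : ∀ ε > 0, ∃ η > 0, ∀ f ∈ F, ∀ x y, |G x - G y| < η → dist (f x) (f y) < ε) :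
    TopContractive F := by
  have hpow : ∀ l : List (X → X), (∀ f ∈ l, f ∈ F) → ∀ x y,
      |G (l.foldr (· ∘ ·) id x) - G (l.foldr (· ∘ ·) id y)| ≤ q ^ l.length := by
    intro l
    induction l with
    | nil => simpa using hG
    | cons f l ih =>
      intro hl x y
      rw [List.forall_mem_cons] at hl
      rw [List.length_cons, pow_succ']
      exact (hF f hl.1 _ _).trans (mul_le_mul_of_nonneg_left (ih hl.2 x y) hq0)
  intro ε hε
  obtain ⟨η, hη, hηF⟩ := hu (ε / 2) (half_pos hε)
  obtain ⟨n, hn⟩ := exists_pow_lt_of_lt_one hη hq1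
  refine ⟨n + 1, fun l hl hlen => ?_⟩
  cases l with
  | nil => simp at hlen
  | cons f l =>
    rw [List.forall_mem_cons] at hl
    rw [List.length_cons, Nat.add_right_cancel_iff] at hlen
    refine (Metric.diam_le_of_forall_dist_le (half_pos hε).le ?_).trans_lt (half_lt_self hε)
    rintro _ ⟨x, rfl⟩ _ ⟨y, rfl⟩
    exact (hηF f hl.1 _ _ ((hpow l hl.2 x y).trans_lt (hlen ▸ hn))).le

/-- A compact space covered by a curve `Γ` of length `5 / 4` as measured by a function `G` with
values in `[0, 1 / 2]` is a topological fractal with three witnessing maps. -/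
theorem exists_three_contractive_of_curve {X : Type*} [MetricSpace X] {G : X → ℝ}
    (hG : Continuous G) (hGrange : range G = Icc 0 (1 / 2)) {Γ : ℝ → X} (hΓ : Continuous Γ)
    (hlip : LipschitzWith 1 (G ∘ Γ)) (hsurj : SurjOn Γ (Icc 0 (5 / 4)) univ) :
    ∃ F : Set (X → X), F.Finite ∧ F.ncard ≤ 3 ∧ (∀ f ∈ F, Continuous f) ∧
      TopContractive F ∧ (⋃ f ∈ F, range f) = univ := by
  have hG0 : ∀ x, G x ∈ Icc (0 : ℝ) (1 / 2) := fun x => hGrange ▸ mem_range_self x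
  let f : Fin 3 → X → X := fun i x => Γ ((i + 2 * G x) * (5 / 12))
  have harg : ∀ (i : Fin 3) x, ((i : ℝ) + 2 * G x) * (5 / 12) ∈ Icc (0 : ℝ) (5 / 4) := by
    intro i x
    have hi : ((i : ℕ) : ℝ) ≤ 2 := by exact_mod_cast Nat.le_of_lt_succ i.2
    have hi0 : (0 : ℝ) ≤ (i : ℕ) := Nat.cast_nonneg _
    obtain ⟨h1, h2⟩ := hG0 x
    constructor <;> linarith
  have hdist : ∀ (i : Fin 3) x y, dist (((i : ℝ) + 2 * G x) * (5 / 12))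
      (((i : ℝ) + 2 * G y) * (5 / 12)) = 5 / 6 * |G x - G y| := by
    intro i x y
    rw [Real.dist_eq, show ((i : ℝ) + 2 * G x) * (5 / 12) - ((i : ℝ) + 2 * G y) * (5 / 12) =
      5 / 6 * (G x - G y) by ring, abs_mul, abs_of_pos (by norm_num : (0 : ℝ) < 5 / 6)]
  refine ⟨range f, finite_range f, ?_, ?_, ?_, ?_⟩
  · rw [← image_univ]
    refine (ncard_image_le finite_univ).trans ?_
    simp [ncard_univ]
  · rintro _ ⟨i, rfl⟩
    fun_prop
  · refine topContractive_of_factor (G := G) (q := 5 / 6) (by norm_num) (by norm_num) ?_ ?_ ?_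
    · intro x y
      obtain ⟨h1, h2⟩ := hG0 x
      obtain ⟨h3, h4⟩ := hG0 y
      rw [abs_le]
      constructor <;> linarith
    · rintro _ ⟨i, rfl⟩ x y
      have := hlip.dist_le_mul (((i : ℝ) + 2 * G x) * (5 / 12)) (((i : ℝ) + 2 * G y) * (5 / 12))
      rw [hdist] at this
      simpa [Real.dist_eq] using this
    · intro ε hε
      obtain ⟨η, hη, h⟩ := Metric.uniformContinuousOn_iff.1
        (isCompact_Icc.uniformContinuousOn_of_continuous (hΓ.continuousOn (s := Icc 0 (5 / 4)))) ε hε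
      refine ⟨η, hη, ?_⟩
      rintro _ ⟨i, rfl⟩ x y hxy
      refine h _ (harg i x) _ (harg i y) ?_
      rw [hdist]
      linarith [abs_nonneg (G x - G y)]
  · refine eq_univ_of_forall fun x => ?_
    obtain ⟨s, hs, rfl⟩ := hsurj (mem_univ x)
    have key : ∀ i : Fin 3, (i : ℝ) ≤ 12 / 5 * s → 12 / 5 * s ≤ i + 1 →
        Γ s ∈ ⋃ f' ∈ range f, range f' := by
      intro i h1 h2
      have hmem : (12 / 5 * s - i) / 2 ∈ range G := by
        rw [hGrange]
        constructor <;> linarith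
      obtain ⟨x, hx⟩ := hmem
      refine mem_biUnion (mem_range_self i) ⟨x, ?_⟩
      simp only [f, hx]
      congr 1
      ring
    obtain ⟨h0, h1⟩ := hs
    rcases le_total (12 / 5 * s) 1 with h2 | h2
    · exact key 0 (by simpa using h0) (by simpa using h2)
    rcases le_total (12 / 5 * s) 2 with h3 | h3
    · exact key 1 (by simpa using h2) (by norm_num; linarith)
    · exact key 2 (by simpa using h3) (by norm_num; linarith)

/-- A Peano continuum containing a generalized arc, that is, a Peano continuum `Y` with a function
`g : Y → [0, 1]` all but countably many of whose fibers are points, attached to the rest of the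
space only at its two ends, is a topological fractal. -/
theorem exists_three_contractive_of_generalized_arc {X Y : Type*} [MetricSpace X] [CompactSpace X]
    [ConnectedSpace X] [LocallyConnectedSpace X] [MetricSpace Y] [CompactSpace Y]
    [ConnectedSpace Y] [LocallyConnectedSpace Y] {j : Y → X} (hj : Continuous j)
    (hjinj : Function.Injective j) {g : Y → ℝ} (hg : Continuous g) {c₀ c₁ : Y}
    (hc₀ : g c₀ = 0) (hc₁ : g c₁ = 1) (hg01 : ∀ y, g y ∈ Icc (0 : ℝ) 1) {T : Set ℝ}
    (hT : T.Countable) (hT01 : T ⊆ Ioo 0 1) (hinj : ∀ y y', g y = g y' → g y ∉ T → y = y')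
    (hopen : IsOpen (j '' {y | 0 < g y ∧ g y < 1})) :
    ∃ F : Set (X → X), F.Finite ∧ F.ncard ≤ 3 ∧ (∀ f ∈ F, Continuous f) ∧
      TopContractive F ∧ (⋃ f ∈ F, range f) = univ := by
  have hjc : IsClosedEmbedding j := hj.isClosedEmbedding hjinj
  have hend₀ : ∀ y, g y = 0 → y = c₀ := fun y hy =>
    hinj y c₀ (hy.trans hc₀.symm) (hy ▸ fun h => lt_irrefl _ (hT01 h).1)
  have hend₁ : ∀ y, g y = 1 → y = c₁ := fun y hy =>
    hinj y c₁ (hy.trans hc₁.symm) (hy ▸ fun h => lt_irrefl _ (hT01 h).2)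
  set Z : Set X := (j '' {y | 0 < g y ∧ g y < 1})ᶜ with hZ_def
  have hZ : IsClosed Z := hopen.isClosed_compl
  have hjZ : ∀ y, j y ∈ Z ↔ y = c₀ ∨ y = c₁ := by
    intro y
    rw [hZ_def, mem_compl_iff, hjinj.mem_set_image]
    constructor
    · intro h
      rcases (hg01 y).1.eq_or_lt with h0 | h0
      · exact Or.inl (hend₀ y h0.symm)
      · rcases (hg01 y).2.eq_or_lt with h1 | h1
        · exact Or.inr (hend₁ y h1)
        · exact absurd ⟨h0, h1⟩ h
    · rintro (rfl | rfl) ⟨h, h'⟩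
      · exact h.ne hc₀.symm
      · exact h'.ne hc₁
  have hZF : Z \ {j c₀, j c₁} = (range j)ᶜ := by
    ext x
    constructor
    · rintro ⟨hxZ, hx⟩ ⟨y, rfl⟩
      rcases (hjZ y).1 hxZ with rfl | rfl <;> simp at hx
    · intro hx
      refine ⟨fun ⟨y, _, hy⟩ => hx ⟨y, hy⟩, ?_⟩
      rintro (rfl | rfl) <;> exact hx (mem_range_self _)
  have hZopen : IsOpen (Z \ {j c₀, j c₁}) := hZF ▸ hjc.isClosed_range.isOpen_compl
  have : LocallyConnectedSpace Z :=
    hZ.locallyConnectedSpace_of_finite_boundary (Set.toFinite _) hZopen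
  have : CompactSpace Z := isCompact_iff_compactSpace.1 hZ.isCompact
  let z₀ : Z := ⟨j c₀, (hjZ _).2 (Or.inl rfl)⟩
  let z₁ : Z := ⟨j c₁, (hjZ _).2 (Or.inr rfl)⟩
  obtain ⟨α, hα, -, hα1, hαs⟩ := exists_continuous_surjOn_connectedComponent z₀
  obtain ⟨ω, hω, hω0, -, hωs⟩ := exists_continuous_surjOn_connectedComponent z₁
  obtain ⟨γ, hγ, hγlip, hγ0, hγ1, hγs⟩ := exists_lipschitz_covering_curve hg hc₀ hc₁ hg01 hT hT01
    hinj (δ := 1 / 12) (by norm_num)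
  set k : Y → ℝ := fun y => min (g y) (1 - g y) with hk
  have hkc : Continuous k := by fun_prop
  set G : X → ℝ := Function.extend j k 0 with hG_def
  have hGj : ∀ y, G (j y) = k y := fun y => hjinj.extend_apply _ _ _
  have hGZ : ∀ x ∈ Z, G x = 0 := by
    intro x hx
    by_cases hxj : ∃ y, j y = x
    · obtain ⟨y, rfl⟩ := hxj
      rw [hGj]
      rcases (hjZ y).1 hx with rfl | rfl
      · simp [hk, hc₀]
      · simp [hk, hc₁]
    · exact Function.extend_apply' _ _ _ hxj
  have hGc : Continuous G := by
    have hcov : range j ∪ Z = univ := eq_univ_of_forall fun x => by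
      by_cases hx : x ∈ range j
      · exact Or.inl hx
      · exact Or.inr (hZF.superset hx).1
    rw [← continuousOn_univ, ← hcov]
    refine ContinuousOn.union_of_isClosed ?_ ?_ hjc.isClosed_range hZ
    · rw [← image_univ, hjc.isInducing.continuousOn_image_iff, continuousOn_univ]
      exact hkc.congr fun y => (hGj y).symm
    · exact continuousOn_const.congr hGZ
  set Γ : ℝ → X := fun s => if s ≤ 1 / 12 then α (12 * s) else
    if s ≤ 7 / 6 then j (γ (s - 1 / 12)) else ω (12 * (s - 7 / 6)) with hΓ_def
  have hΓc : Continuous Γ := by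
    refine Continuous.if_le (by fun_prop) (Continuous.if_le (by fun_prop) (by fun_prop)
      continuous_id continuous_const ?_) continuous_id continuous_const ?_
    · rintro s rfl
      rw [hγ1 _ (by norm_num), hω0 _ (by norm_num)]
    · rintro s rfl
      rw [if_pos (by norm_num), hα1 _ (by norm_num), hγ0 _ (by norm_num)]
  have hGΓ : ∀ s, G (Γ s) = k (γ (s - 1 / 12)) := by
    intro s
    simp only [hΓ_def]
    split_ifs with h1 h2
    · rw [hGZ _ (α _).2, hγ0 _ (by linarith)]
      simp [hk, hc₀]
    · exact hGj _
    · rw [hGZ _ (ω _).2, hγ1 _ (by linarith)]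
      simp [hk, hc₁]
  have hglip : LipschitzWith 1 fun s => g (γ (s - 1 / 12)) := by
    refine LipschitzWith.of_dist_le_mul fun s s' => ?_
    simpa using hγlip.dist_le_mul (s - 1 / 12) (s' - 1 / 12)
  have hGlip : LipschitzWith 1 (G ∘ Γ) := by
    rw [show G ∘ Γ = fun s => k (γ (s - 1 / 12)) from funext hGΓ]
    have h2 : LipschitzWith 1 fun s => 1 - g (γ (s - 1 / 12)) := by
      refine LipschitzWith.of_dist_le_mul fun s s' => ?_
      rw [dist_sub_left]
      exact hglip.dist_le_mul s s'
    simpa using hglip.min h2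
  refine exists_three_contractive_of_curve hGc ?_ hΓc hGlip ?_
  · refine Subset.antisymm ?_ fun t ht => ?_
    · rintro _ ⟨x, rfl⟩
      by_cases hx : x ∈ Z
      · rw [hGZ x hx]
        norm_num
      · obtain ⟨y, hy, rfl⟩ := not_not.1 hx
        rw [hGj]
        refine ⟨le_min hy.1.le (by linarith [hy.2]), ?_⟩
        rcases le_total (g y) (1 / 2) with h | h
        · exact (min_le_left _ _).trans h
        · exact (min_le_right _ _).trans (by linarith)
    · obtain ⟨y, hy⟩ := mem_range_of_exists_le_of_exists_ge hg (c := t) ⟨c₀, hc₀ ▸ ht.1⟩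
        ⟨c₁, by rw [hc₁]; linarith [ht.2]⟩
      refine ⟨j y, ?_⟩
      rw [hGj, hk]
      dsimp only
      rw [hy, min_eq_left (by linarith [ht.2])]
  · intro x _
    by_cases hx : x ∈ Z
    · obtain ⟨c, hc, hxc⟩ := hZ.exists_mem_connectedComponent_of_boundary hZopen
        (insert_nonempty _ _) ⟨x, hx⟩
      rcases hc with hc | hc
      · have hcz : c = z₀ := Subtype.ext hc
        rw [hcz] at hxc
        obtain ⟨s, hs, hsx⟩ := hαs hxc
        refine ⟨s / 12, ⟨by linarith [hs.1], by linarith [hs.2]⟩, ?_⟩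
        simp only [hΓ_def]
        rw [if_pos (by linarith [hs.2]), mul_div_cancel₀ _ (by norm_num), hsx]
      · have hcz : c = z₁ := Subtype.ext hc
        rw [hcz] at hxc
        obtain ⟨s, hs, hsx⟩ := hωs hxc
        refine ⟨s / 12 + 7 / 6, ⟨by linarith [hs.1], by linarith [hs.2]⟩, ?_⟩
        simp only [hΓ_def]
        rw [if_neg (by linarith [hs.1])]
        rcases hs.1.eq_or_lt with h0 | h0
        · rw [if_pos (by linarith), hγ1 _ (by linarith)]
          rw [hω0 s h0.ge] at hsx
          exact congrArg Subtype.val hsx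
        · rw [if_neg (by linarith), add_sub_cancel_right, mul_div_cancel₀ _ (by norm_num), hsx]
    · obtain ⟨y, hy, rfl⟩ := not_not.1 hx
      obtain ⟨s, hs, rfl⟩ := hγs (mem_univ y)
      have hs0 : 0 < s := by
        by_contra h
        rw [hγ0 s (not_lt.1 h)] at hy
        exact hy.1.ne hc₀.symm
      refine ⟨s + 1 / 12, ⟨by linarith, by linarith [hs.2]⟩, ?_⟩
      simp only [hΓ_def]
      rw [if_neg (by linarith), if_pos (by linarith [hs.2]), add_sub_cancel_right]

/-! ### Uncountably many points separating two given points -/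

/-- An uncountable set of reals contains an order copy of the rationals. -/
theorem exists_strictMono_rat_of_not_countable {S : Set ℝ} (hS : ¬ S.Countable) :
    ∃ e : ℚ → ℝ, StrictMono e ∧ ∀ i, e i ∈ S := by
  set S' : Set ℝ := {s | s ∈ S ∧ ∀ r > s, ¬ (S ∩ Ioo s r).Countable} with hS'
  have hcount : (S \ S').Countable := by
    let D : ℚ → Set ℝ := fun r => {s | s ∈ S ∧ s < r ∧ (S ∩ Ioo s r).Countable}
    have hD : ∀ r, (D r).Countable := fun r => by
      obtain ⟨T, hTD, hT, hTeq⟩ := TopologicalSpace.isOpen_biUnion_countable (D r)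
        (fun s => Ioo s (r : ℝ)) fun _ _ => isOpen_Ioo
      have h1 : (⋃ s ∈ T, S ∩ Ioo s (r : ℝ)).Countable :=
        hT.biUnion fun s hs => (hTD hs).2.2
      set M : Set ℝ := D r \ ⋃ s ∈ T, S ∩ Ioo s (r : ℝ) with hM
      have h2 : M.Subsingleton := by
        have key : ∀ a ∈ M, ∀ b ∈ M, ¬ a < b := fun a ha b hb hab => hb.2 <| by
          have : b ∈ ⋃ s ∈ D r, Ioo s (r : ℝ) := mem_biUnion ha.1 ⟨hab, hb.1.2.1⟩
          rw [← hTeq] at this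
          simp only [mem_iUnion] at this ⊢
          obtain ⟨s, hs, hb'⟩ := this
          exact ⟨s, hs, hb.1.1, hb'⟩
        exact fun a ha b hb => le_antisymm (not_lt.1 (key b hb a ha)) (not_lt.1 (key a ha b hb))
      refine (h1.union h2.countable).mono fun a ha => ?_
      by_cases h : a ∈ ⋃ s ∈ T, S ∩ Ioo s (r : ℝ)
      · exact Or.inl h
      · exact Or.inr ⟨ha, h⟩
    refine (countable_iUnion hD).mono fun s ⟨hs, hs'⟩ => ?_
    have : ∃ r > s, (S ∩ Ioo s r).Countable := by
      by_contra! hc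
      exact hs' ⟨hs, hc⟩
    obtain ⟨r, hr, hcr⟩ := this
    obtain ⟨i, hi, hir⟩ := exists_rat_btwn hr
    exact mem_iUnion.2 ⟨i, hs, hi, hcr.mono (by gcongr)⟩
  have hne : ∀ U : Set ℝ, ¬ (S ∩ U).Countable → ¬ (S' ∩ U).Countable := fun U hU hc =>
    hU ((hc.union hcount).mono fun a ha => by
      by_cases h : a ∈ S'
      · exact Or.inl ⟨h, ha.2⟩
      · exact Or.inr ⟨ha.1, h⟩)
  have hdense : DenselyOrdered S' := ⟨fun a b hab => by
    have h := hne _ (a.2.2 b hab)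
    obtain ⟨c, hc⟩ : (S' ∩ Ioo (a : ℝ) b).Nonempty := by
      rw [nonempty_iff_ne_empty]
      exact fun h0 => h (h0 ▸ countable_empty)
    exact ⟨⟨c, hc.1⟩, hc.2.1, hc.2.2⟩⟩
  have hnt : Nontrivial S' := by
    rw [nontrivial_coe_sort]
    by_contra hc
    exact hne univ (by simpa using hS) (by simpa using (not_nontrivial_iff.1 hc).countable)
  obtain ⟨f⟩ := Order.embedding_from_countable_to_dense ℚ S'
  exact ⟨fun i => f i, fun i j hij => f.strictMono hij, fun i => (f i).2.1⟩

theorem closure_connectedComponentIn_compl_subset {V : Type*} [TopologicalSpace V] [T1Space V]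
    [LocallyConnectedSpace V] (p x : V) :
    closure (connectedComponentIn {x}ᶜ p) ⊆ insert x (connectedComponentIn {x}ᶜ p) := by
  intro y hy
  by_cases hyx : y = x
  · exact Or.inl hyx
  have hyx' : y ∈ ({x}ᶜ : Set V) := hyx
  obtain ⟨z, hz, hz'⟩ := mem_closure_iff.1 hy _
    (isOpen_compl_singleton (x := x)).connectedComponentIn (mem_connectedComponentIn hyx')
  refine Or.inr ?_
  rw [connectedComponentIn_eq hz', ← connectedComponentIn_eq hz]
  exact mem_connectedComponentIn hyx'

theorem isPreconnected_insert_connectedComponentIn_compl {V : Type*} [TopologicalSpace V]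
    [T1Space V] [ConnectedSpace V] [LocallyConnectedSpace V] {p x : V} (hpx : p ≠ x) :
    IsPreconnected (insert x (connectedComponentIn {x}ᶜ p)) := by
  refine isPreconnected_connectedComponentIn.subset_closure (subset_insert _ _) ?_
  refine insert_subset ?_ subset_closure
  by_contra hx
  have hcl : IsClosed (connectedComponentIn {x}ᶜ p) := closure_subset_iff_isClosed.1 fun y hy =>
    (closure_connectedComponentIn_compl_subset p x hy).resolve_left fun h => hx (h ▸ hy)
  have := IsClopen.eq_univ ⟨hcl, (isOpen_compl_singleton (x := x)).connectedComponentIn⟩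
    ⟨p, mem_connectedComponentIn (show p ∈ ({x}ᶜ : Set V) from hpx)⟩
  exact connectedComponentIn_subset {x}ᶜ p (this ▸ mem_univ x) rfl

/-- Points separating `p` from `q` are linearly ordered by the components of `p`. -/
theorem connectedComponentIn_compl_comparable {V : Type*} [TopologicalSpace V]
    [T1Space V] [ConnectedSpace V] [LocallyConnectedSpace V] {p q x y : V}
    (hpx : p ≠ x) (hpy : p ≠ y) (hqx : q ∉ connectedComponentIn {x}ᶜ p)
    (hqy : q ∉ connectedComponentIn {y}ᶜ p) (hxy : x ≠ y) :
    insert x (connectedComponentIn {x}ᶜ p) ⊆ connectedComponentIn {y}ᶜ p ∨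
      insert y (connectedComponentIn {y}ᶜ p) ⊆ connectedComponentIn {x}ᶜ p := by
  have key : ∀ x y : V, p ≠ y → x ≠ y → x ∉ connectedComponentIn {y}ᶜ p →
      insert y (connectedComponentIn {y}ᶜ p) ⊆ connectedComponentIn {x}ᶜ p := by
    intro x y hpy hxy hx
    refine (isPreconnected_insert_connectedComponentIn_compl hpy).subset_connectedComponentIn
      (mem_insert_of_mem _ (mem_connectedComponentIn (show p ∈ ({y}ᶜ : Set V) from hpy))) ?_
    rintro z hz rfl
    exact hz.elim hxy hx
  by_cases hx : x ∈ connectedComponentIn {y}ᶜ p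
  · by_cases hy : y ∈ connectedComponentIn {x}ᶜ p
    · exfalso
      set W := connectedComponentIn {x}ᶜ p ∪ connectedComponentIn {y}ᶜ p with hW
      have hcl : IsClosed W := by
        refine closure_subset_iff_isClosed.1 ?_
        rw [hW, closure_union]
        refine union_subset ?_ ?_
        · exact (closure_connectedComponentIn_compl_subset p x).trans
            (insert_subset (Or.inr hx) subset_union_left)
        · exact (closure_connectedComponentIn_compl_subset p y).trans
            (insert_subset (Or.inl hy) subset_union_right)
      have := IsClopen.eq_univ ⟨hcl, (isOpen_compl_singleton (x := x)).connectedComponentIn.union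
        (isOpen_compl_singleton (x := y)).connectedComponentIn⟩ ⟨x, Or.inr hx⟩
      have hq : q ∈ W := this ▸ mem_univ q
      exact hq.elim hqx hqy
    · exact Or.inl (key y x hpx hxy.symm hy)
  · exact Or.inr (key x y hpy hxy hx)

theorem exists_rat_chain_of_separating {V : Type*} [TopologicalSpace V] [T1Space V]
    [ConnectedSpace V] [LocallyConnectedSpace V] [SecondCountableTopology V] {p q : V} {E : Set V}
    (hE : ¬ E.Countable) (hp : ∀ x ∈ E, p ≠ x) (hq : ∀ x ∈ E, q ∉ connectedComponentIn {x}ᶜ p) :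
    ∃ e : ℚ → V, (∀ i, e i ∈ E) ∧ ∀ i j, i < j →
      insert (e i) (connectedComponentIn {e i}ᶜ p) ⊆ connectedComponentIn {e j}ᶜ p := by
  classical
  obtain ⟨b, hbc, -, hb⟩ := TopologicalSpace.exists_countable_basis V
  have : Countable b := hbc
  have := Encodable.ofCountable b
  obtain ⟨w, hw0, c, hw, -⟩ := posSumOfEncodable one_pos b
  let A : V → Set V := fun x => connectedComponentIn {x}ᶜ p
  let φ : V → ℝ := fun x => ∑' i : b, {i : b | (i : Set V) ⊆ A x}.indicator w i
  have hφ : ∀ x y, insert x (A x) ⊆ A y → φ x < φ y := by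
    intro x y hxy
    obtain ⟨u, hub, hxu, huy⟩ := hb.exists_subset_of_mem_open (hxy (mem_insert _ _))
      (isOpen_compl_singleton (x := y)).connectedComponentIn
    have hux : ¬ u ⊆ A x := fun h => connectedComponentIn_subset {x}ᶜ p (h hxu) rfl
    refine Summable.tsum_lt_tsum (i := ⟨u, hub⟩) (fun i => ?_) ?_
      (hw.summable.indicator _) (hw.summable.indicator _)
    · exact indicator_le_indicator_of_subset
        (fun (i : b) (hi : (i : Set V) ⊆ A x) => hi.trans ((subset_insert _ _).trans hxy))
        (fun i => (hw0 i).le) i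
    · rw [indicator_of_notMem (show (⟨u, hub⟩ : b) ∉ {i : b | (i : Set V) ⊆ A x} from hux),
        indicator_of_mem (show (⟨u, hub⟩ : b) ∈ {i : b | (i : Set V) ⊆ A y} from huy)]
      exact hw0 _
  have hcmp : ∀ x ∈ E, ∀ y ∈ E, x ≠ y → insert x (A x) ⊆ A y ∨ insert y (A y) ⊆ A x :=
    fun x hx y hy hxy => connectedComponentIn_compl_comparable (hp x hx) (hp y hy) (hq x hx)
      (hq y hy) hxy
  have hinj : InjOn φ E := fun x hx y hy hxy => by
    by_contra hne
    rcases hcmp x hx y hy hne with h | h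
    · exact (hφ _ _ h).ne hxy
    · exact (hφ _ _ h).ne' hxy
  obtain ⟨e, he, heE⟩ := exists_strictMono_rat_of_not_countable
    (S := φ '' E) fun h => hE (countable_of_injective_of_countable_image hinj h)
  choose f hfE hfe using heE
  refine ⟨f, hfE, fun i j hij => ?_⟩
  have hlt : φ (f i) < φ (f j) := by
    rw [hfe, hfe]
    exact he hij
  exact (hcmp _ (hfE i) _ (hfE j) fun h => hlt.ne (congrArg φ h)).resolve_right
    fun h => hlt.not_gt (hφ _ _ h)

/-- The Urysohn function of a chain of open sets indexed by the rationals. -/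
theorem exists_continuous_of_rat_chain {V : Type*} [TopologicalSpace V] {A : ℚ → Set V}
    (ho : ∀ i, IsOpen (A i)) (hA : ∀ i j, i < j → closure (A i) ⊆ A j) :
    ∃ g : V → ℝ, Continuous g ∧ (∀ y, g y ∈ Icc (0 : ℝ) 1) ∧
      (∀ y i, 0 < i → y ∈ A i → g y ≤ i) ∧ ∀ y (i : ℚ), i ≤ 1 → g y < i → y ∈ A i := by
  let B : V → Set ℝ := fun y => insert 1 ((↑) '' {i : ℚ | 0 < i ∧ y ∈ A i})
  have hB0 : ∀ y, ∀ b ∈ B y, 0 ≤ b := by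
    rintro y b (rfl | ⟨i, hi, rfl⟩)
    · exact zero_le_one
    · exact_mod_cast hi.1.le
  have hbdd : ∀ y, BddBelow (B y) := fun y => ⟨0, hB0 y⟩
  let g : V → ℝ := fun y => sInf (B y)
  have h0 : ∀ y, 0 ≤ g y := fun y => le_csInf ⟨1, mem_insert _ _⟩ (hB0 y)
  have h1 : ∀ y, g y ≤ 1 := fun y => csInf_le (hbdd y) (mem_insert _ _)
  have hle : ∀ y i, 0 < i → y ∈ A i → g y ≤ i := fun y i hi hy =>
    csInf_le (hbdd y) (Or.inr ⟨i, ⟨hi, hy⟩, rfl⟩)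
  have hlt : ∀ y, ∀ c ≤ (1 : ℝ), g y < c → ∃ i : ℚ, 0 < i ∧ (i : ℝ) < c ∧ y ∈ A i := by
    intro y c hc hy
    obtain ⟨b, hb, hbc⟩ := exists_lt_of_csInf_lt ⟨1, mem_insert _ _⟩ hy
    rcases hb with rfl | ⟨i, hi, rfl⟩
    · exact absurd hbc hc.not_gt
    · exact ⟨i, hi.1, hbc, hi.2⟩
  have hmem : ∀ y (i : ℚ), i ≤ 1 → g y < i → y ∈ A i := by
    intro y i hi hy
    obtain ⟨k, -, hki, hyk⟩ := hlt y i (by exact_mod_cast hi) hy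
    exact hA k i (by exact_mod_cast hki) (subset_closure hyk)
  refine ⟨g, continuous_iff_continuousAt.2 fun y => tendsto_order.2 ⟨fun c hc => ?_, fun c hc => ?_⟩,
    fun y => ⟨h0 y, h1 y⟩, hle, hmem⟩
  · rcases lt_or_ge c 0 with hc0 | hc0
    · exact Eventually.of_forall fun z => hc0.trans_le (h0 z)
    obtain ⟨k, hck, hk⟩ := exists_rat_btwn hc
    obtain ⟨l, hkl, hl⟩ := exists_rat_btwn hk
    have hk0 : (0 : ℚ) < k := by exact_mod_cast hc0.trans_lt hck
    have hkl' : k < l := by exact_mod_cast hkl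
    have hy : y ∉ closure (A k) := fun hy => (hle y l (hk0.trans hkl') (hA k l hkl' hy)).not_gt hl
    filter_upwards [isClosed_closure.isOpen_compl.mem_nhds hy] with z hz
    refine hck.trans_le (not_lt.1 fun hzk => hz (subset_closure (hmem z k ?_ hzk)))
    exact_mod_cast (hk.trans_le (h1 y)).le
  · rcases lt_or_ge 1 c with hc1 | hc1
    · exact Eventually.of_forall fun z => (h1 z).trans_lt hc1
    obtain ⟨k, hk0, hkc, hyk⟩ := hlt y c hc1 hc
    filter_upwards [(ho k).mem_nhds hyk] with z hz
    exact (hle z k hk0 hz).trans_lt hkc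

/-- A connected, locally connected space with uncountably many cut points carries a nonconstant
continuous function whose distinct levels are separated by single points. -/
theorem exists_continuous_separated_levels {V : Type*} [TopologicalSpace V] [T1Space V]
    [ConnectedSpace V] [LocallyConnectedSpace V] [SecondCountableTopology V]
    (hE : ¬ {x : V | ¬ IsPreconnected ({x}ᶜ : Set V)}.Countable) :
    ∃ g : V → ℝ, Continuous g ∧ (∃ y, g y = 0) ∧ (∃ y, g y = 1) ∧
      ∀ r r', r < r' → ∃ w, ∀ C : Set V, IsPreconnected C → ∀ z ∈ C, ∀ z' ∈ C,
        g z ≤ r → r' ≤ g z' → w ∈ C := by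
  let d := TopologicalSpace.denseSeq V
  have hd : DenseRange d := TopologicalSpace.denseRange_denseSeq V
  let E : ℕ × ℕ → Set V := fun k =>
    {x | d k.1 ≠ x ∧ d k.2 ≠ x ∧ d k.2 ∉ connectedComponentIn {x}ᶜ (d k.1)}
  obtain ⟨⟨m, n⟩, hmn⟩ : ∃ k, ¬ (E k).Countable := by
    by_contra! hc
    refine hE ((countable_iUnion hc).mono fun x hx => ?_)
    have hx' : ¬ IsPreconnected ({x}ᶜ : Set V) := hx
    simp only [IsPreconnected, not_forall] at hx'
    obtain ⟨u, v, hu, hv, huv, hu', hv', hd'⟩ := hx'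
    have hxo : IsOpen ({x}ᶜ : Set V) := isOpen_compl_singleton
    obtain ⟨m, hm⟩ := hd.exists_mem_open (hxo.inter hu) hu'
    obtain ⟨n, hn⟩ := hd.exists_mem_open (hxo.inter hv) hv'
    refine mem_iUnion.2 ⟨(m, n), hm.1, hn.1, fun h => hd' ?_⟩
    obtain ⟨z, hz, hz'⟩ := isPreconnected_connectedComponentIn u v hu hv
      ((connectedComponentIn_subset _ _).trans huv)
      ⟨d m, mem_connectedComponentIn hm.1, hm.2⟩ ⟨d n, h, hn.2⟩
    exact ⟨z, connectedComponentIn_subset _ _ hz, hz'⟩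
  set p := d m
  set q := d n
  obtain ⟨e, heE, he⟩ := exists_rat_chain_of_separating (p := p) (q := q) hmn
    (fun x hx => hx.1) (fun x hx => hx.2.2)
  obtain ⟨g, hg, hg01, hle, hmem⟩ := exists_continuous_of_rat_chain
    (A := fun i => connectedComponentIn {e i}ᶜ p)
    (fun i => (isOpen_compl_singleton (x := e i)).connectedComponentIn)
    (fun i j hij => (closure_connectedComponentIn_compl_subset p (e i)).trans (he i j hij))
  have hpe : ∀ i, p ∈ connectedComponentIn {e i}ᶜ p := fun i =>
    mem_connectedComponentIn (show p ∈ ({e i}ᶜ : Set V) from (heE i).1)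
  refine ⟨g, hg, ⟨p, le_antisymm ?_ (hg01 p).1⟩, ⟨q, le_antisymm (hg01 q).2 ?_⟩, ?_⟩
  · by_contra! hp
    obtain ⟨i, hi, hip⟩ := exists_rat_btwn hp
    exact (hle p i (by exact_mod_cast hi) (hpe i)).not_gt hip
  · by_contra! hq
    obtain ⟨i, hqi, hi⟩ := exists_rat_btwn hq
    exact (heE i).2.2 (hmem q i (by exact_mod_cast hi.le) hqi)
  · intro r r' hrr'
    by_cases hr : 0 ≤ r ∧ r' ≤ 1
    · obtain ⟨i, hri, hir⟩ := exists_rat_btwn hrr'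
      refine ⟨e i, fun C hC z hz z' hz' hzr hzr' => ?_⟩
      by_contra hiC
      have hz1 := hmem z i (by exact_mod_cast hir.le.trans hr.2) (hzr.trans_lt hri)
      have hz2 := hC.subset_connectedComponentIn (F := {e i}ᶜ) hz
        (fun y hy (h : y = e i) => hiC (h ▸ hy)) hz'
      rw [← connectedComponentIn_eq hz1] at hz2
      have := hle z' i (by exact_mod_cast hr.1.trans_lt hri) hz2
      linarith
    · refine ⟨p, fun C _ z _ z' _ hzr hzr' => absurd ⟨(hg01 z).1.trans hzr, ?_⟩ hr⟩
      exact hzr'.trans (hg01 z').2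

theorem countable_not_subsingleton_fibers {V : Type*} [TopologicalSpace V] [T2Space V]
    [ConnectedSpace V] [LocallyConnectedSpace V] [SecondCountableTopology V]
    {g : V → ℝ} (hg : Continuous g) {a b : V}
    (hcut : ∀ r r', r < r' → ∃ w, ∀ C : Set V, IsPreconnected C → ∀ z ∈ C, ∀ z' ∈ C,
        g z ≤ r → r' ≤ g z' → w ∈ C) :
    {t | t ∈ Ioo (g a) (g b) ∧ ¬ {y | g y = t}.Subsingleton}.Countable := by
  let O : ℝ → Set V := fun t => (closure {y | g y < t})ᶜ ∩ (closure {y | t < g y})ᶜ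
  have hO : ∀ t, ∀ y ∈ O t, g y = t := fun t y hy =>
    le_antisymm (not_lt.1 fun h => hy.2 (subset_closure h))
      (not_lt.1 fun h => hy.1 (subset_closure h))
  have hdisj : {t | (O t).Nonempty}.PairwiseDisjoint O := fun s _ t _ hst =>
    disjoint_left.2 fun y hy hy' => hst ((hO s y hy).symm.trans (hO t y hy'))
  refine (hdisj.countable_of_isOpen (fun t _ => isClosed_closure.isOpen_compl.inter
    isClosed_closure.isOpen_compl) fun t ht => ht).mono fun t ⟨ht, hns⟩ => ?_
  by_contra hOt
  have hcov : ∀ y, y ∈ closure {y | g y < t} ∪ closure {y | t < g y} := fun y => by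
    by_contra hy
    exact hOt ⟨y, fun h => hy (Or.inl h), fun h => hy (Or.inr h)⟩
  obtain ⟨w, -, hw1, hw2⟩ := isPreconnected_closed_iff.1 (isPreconnected_univ (α := V)) _ _
    isClosed_closure isClosed_closure (fun y _ => hcov y) ⟨a, trivial, subset_closure ht.1⟩
    ⟨b, trivial, subset_closure ht.2⟩
  have hwt : g w = t := le_antisymm
    (closure_minimal (fun y (hy : g y < t) => hy.le) (isClosed_le hg continuous_const) hw1)
    (closure_minimal (fun y (hy : t < g y) => hy.le) (isClosed_le continuous_const hg) hw2)
  have hs1 : ({y | g y = t} ∩ closure {y | g y < t}).Subsingleton := by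
    refine subsingleton_fiber_inter_closure fun s hs => ?_
    obtain ⟨v, hv⟩ := hcut s t hs
    exact ⟨v, fun C hC z hz z' hz' h h' => hv C hC z hz z' hz' h h'.ge⟩
  have hs2 : ({y | g y = t} ∩ closure {y | t < g y}).Subsingleton := by
    have := subsingleton_fiber_inter_closure (g := fun y => -g y) (t := -t) fun s hs => by
      obtain ⟨v, hv⟩ := hcut t (-s) (lt_neg_of_lt_neg hs)
      exact ⟨v, fun C hC z hz z' hz' h h' => hv C hC z' hz' z hz (neg_inj.1 h').le
        (neg_le.1 h)⟩
    simpa only [neg_inj, neg_lt_neg_iff] using this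
  have hall : ∀ y, g y = t → y = w := fun y hy => (hcov y).elim
    (fun h => hs1 ⟨hy, h⟩ ⟨hwt, hw1⟩) (fun h => hs2 ⟨hy, h⟩ ⟨hwt, hw2⟩)
  exact hns fun y hy z hz => (hall y hy).trans (hall z hz).symm

theorem isPreconnected_preimage_Icc_of_unique {V : Type*} [TopologicalSpace V] [T1Space V]
    [ConnectedSpace V] {g : V → ℝ} (hg : Continuous g) {s t : ℝ} (hst : s ≤ t) {a b : V}
    (ha : ∀ y, g y = s ↔ y = a) (hb : ∀ y, g y = t ↔ y = b) :
    IsPreconnected (g ⁻¹' Icc s t) := by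
  have h1 : IsPreconnected (univ ∩ g ⁻¹' Ici s) := by
    refine isPreconnected_univ.inter_of_boundary_subset_singleton (F := {a}) (x := a)
      (isClosed_Ici.preimage hg) ?_ trivial ((ha a).2 rfl).ge inter_subset_right
    convert isOpen_Ioi.preimage hg (t := Ioi s) using 1
    ext y
    simp [← ha, lt_iff_le_and_ne, eq_comm]
  rw [univ_inter] at h1
  have h2 := h1.inter_of_boundary_subset_singleton (S := g ⁻¹' Iic t) (F := {b}) (x := b)
    (isClosed_Iic.preimage hg) ?_ (hst.trans ((hb b).2 rfl).ge) ((hb b).2 rfl).le inter_subset_right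
  · rwa [← preimage_inter, Ici_inter_Iic] at h2
  · convert isOpen_Iio.preimage hg (t := Iio t) using 1
    ext y
    simp [← hb, lt_iff_le_and_ne]

/-- In a locally compact space with separated levels, some band of levels is a continuum meeting
each of its two extreme levels in a single point. -/
theorem exists_compact_band {V : Type*} [TopologicalSpace V] [T2Space V]
    [LocallyCompactSpace V] [ConnectedSpace V] {g : V → ℝ} (hg : Continuous g) {a b : V}
    (ha : g a = 0) (hb : g b = 1)
    (hbad : {t | t ∈ Ioo (g a) (g b) ∧ ¬ {y | g y = t}.Subsingleton}.Countable) :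
    ∃ s t c₀ c₁, 0 ≤ s ∧ s < t ∧ t ≤ 1 ∧ (∀ y, g y = s ↔ y = c₀) ∧ (∀ y, g y = t ↔ y = c₁) ∧
      IsCompact (g ⁻¹' Icc s t) ∧ IsPreconnected (g ⁻¹' Icc s t) := by
  rw [ha, hb] at hbad
  have hgood : ∀ x y : ℝ, x < y → 0 ≤ x → y ≤ 1 → ∃ r c, x < r ∧ r < y ∧ ∀ z, g z = r ↔ z = c := by
    intro x y hxy hx hy
    obtain ⟨r, hr, hr'⟩ := (hbad.dense_compl ℝ).exists_between hxy
    obtain ⟨c, hc⟩ : r ∈ range g := mem_range_of_exists_le_of_exists_ge hg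
      ⟨a, ha.le.trans (hx.trans hr'.1.le)⟩ ⟨b, (hr'.2.le.trans hy).trans hb.ge⟩
    have hsub : {y | g y = r}.Subsingleton := by
      by_contra h
      exact hr ⟨⟨hx.trans_lt hr'.1, hr'.2.trans_le hy⟩, h⟩
    exact ⟨r, c, hr'.1, hr'.2, fun z => ⟨fun hz => hsub hz hc, fun hz => hz ▸ hc⟩⟩
  obtain ⟨r, c, hr0, hr1, hrc⟩ := hgood 0 1 one_pos le_rfl le_rfl
  obtain ⟨N, hN, hcN⟩ := exists_compact_mem_nhds c
  have hfr : IsCompact (frontier N) := hN.of_isClosed_subset isClosed_frontier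
    hN.isClosed.frontier_subset
  obtain ⟨η, hη, hηN⟩ := hfr.exists_forall_le' (f := fun y => |g y - r|) (a := 0)
    (by fun_prop) fun y hy => by
      rw [abs_pos, sub_ne_zero]
      intro h
      rw [(hrc y).1 h] at hy
      exact hy.2 (mem_interior_iff_mem_nhds.2 hcN)
  obtain ⟨s, c₀, hs, hsr, hs'⟩ := hgood (max 0 (r - η)) r (by simp [hr0, hη]) (le_max_left _ _) hr1.le
  obtain ⟨t, c₁, hrt, ht, ht'⟩ := hgood r (min 1 (r + η)) (by simp [hr1, hη]) hr0.le (min_le_left _ _)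
  rw [max_lt_iff] at hs
  rw [lt_min_iff] at ht
  have hpre := isPreconnected_preimage_Icc_of_unique hg (hsr.trans hrt).le hs' ht'
  have hsub : g ⁻¹' Icc s t ⊆ interior N := by
    refine hpre.subset_left_of_subset_union isOpen_interior hN.isClosed.isOpen_compl
      (disjoint_left.2 fun y hy hy' => hy' (interior_subset hy)) (fun y hy => ?_)
      ⟨c, ⟨?_, ?_⟩, mem_interior_iff_mem_nhds.2 hcN⟩
    · by_contra hy'
      rw [mem_union, not_or, notMem_compl_iff] at hy'
      have := hηN y ⟨subset_closure hy'.2, hy'.1⟩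
      rw [le_abs] at this
      have h1 : s ≤ g y := hy.1
      have h2 : g y ≤ t := hy.2
      rcases this with h | h <;> linarith
    · rw [(hrc c).2 rfl]
      exact hsr.le
    · rw [(hrc c).2 rfl]
      exact hrt.le
  exact ⟨s, t, c₀, c₁, hs.1.le, hsr.trans hrt, ht.1.le, hs', ht',
    hN.of_isClosed_subset (isClosed_Icc.preimage hg) (hsub.trans interior_subset), hpre⟩

/-! ### Local cut points -/

theorem not_isPreconnected_diff_singleton_of_subset {X : Type*} [TopologicalSpace X] [T1Space X]
    {U W : Set X} {x : X} (hU : IsPreconnected U) (hUx : ¬ IsPreconnected (U \ {x}))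
    (hW : IsOpen W) (hxW : x ∈ W) (hWU : W ⊆ U) : ¬ IsPreconnected (W \ {x}) := by
  intro hWx
  have key : ∀ u v : Set X, IsOpen u → IsOpen v → U \ {x} ⊆ u ∪ v → (U \ {x}) ∩ (u ∩ v) = ∅ →
      W \ {x} ⊆ u → U \ {x} ⊆ u := by
    intro u v hu hv huv hdisj hWu
    have hcov : U ⊆ (u ∪ W) ∪ (v ∩ {x}ᶜ) := fun y hy => by
      by_cases hyx : y = x
      · exact Or.inl (Or.inr (hyx ▸ hxW))
      · exact (huv ⟨hy, hyx⟩).imp Or.inl fun h => ⟨h, hyx⟩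
    have hemp : U ∩ ((u ∪ W) ∩ (v ∩ {x}ᶜ)) = ∅ :=
      eq_empty_of_forall_notMem fun y ⟨hyU, hy, hyv, hyx⟩ =>
        hdisj.subset ⟨⟨hyU, hyx⟩, hy.elim id fun hyW => hWu ⟨hyW, hyx⟩, hyv⟩
    rcases isPreconnected_iff_subset_of_disjoint.1 hU _ _ (hu.union hW)
      (hv.inter isOpen_compl_singleton) hcov hemp with h | h
    · exact fun y hy => (h hy.1).elim id fun hyW => hWu ⟨hyW, hy.2⟩
    · exact absurd rfl (h (hWU hxW)).2
  refine hUx (isPreconnected_iff_subset_of_disjoint.2 fun u v hu hv huv hdisj => ?_)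
  have hWU' : W \ {x} ⊆ U \ {x} := sdiff_subset_sdiff_left hWU
  rcases isPreconnected_iff_subset_of_disjoint.1 hWx u v hu hv (hWU'.trans huv)
    (subset_empty_iff.1 ((inter_subset_inter_left _ hWU').trans hdisj.subset)) with h | h
  · exact Or.inl (key u v hu hv huv hdisj h)
  · exact Or.inr (key v u hv hu (by rwa [union_comm]) (by rwa [inter_comm v]) h)

theorem exists_isOpen_not_countable_cutPoints {X : Type*} [TopologicalSpace X] [T1Space X]
    [SecondCountableTopology X] [LocallyConnectedSpace X]
    (h : ¬ {x : X | IsLocalCutPoint x}.Countable) :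
    ∃ V : Set X, IsOpen V ∧ IsConnected V ∧
      ¬ {x : V | ¬ IsPreconnected ({x}ᶜ : Set V)}.Countable := by
  obtain ⟨b, hbc, -, hb⟩ := TopologicalSpace.exists_countable_basis X
  have : Countable b := hbc
  have : Nonempty X := by
    by_contra hX
    rw [not_nonempty_iff] at hX
    exact h (to_countable _)
  let d := TopologicalSpace.denseSeq X
  let W : b × ℕ → Set X := fun k => connectedComponentIn k.1 (d k.2)
  have hWo : ∀ k, IsOpen (W k) := fun k => (hb.isOpen k.1.2).connectedComponentIn
  obtain ⟨k, hk⟩ : ∃ k, ¬ {x | x ∈ W k ∧ ¬ IsPreconnected (W k \ {x})}.Countable := by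
    by_contra! hc
    refine h ((countable_iUnion hc).mono ?_)
    rintro x ⟨U, hUx, hU, hcut⟩
    obtain ⟨u, hub, hxu, huU⟩ := hb.mem_nhds_iff.1 hUx
    obtain ⟨n, hn⟩ := (TopologicalSpace.denseRange_denseSeq X).exists_mem_open
      (hb.isOpen hub).connectedComponentIn ⟨x, mem_connectedComponentIn hxu⟩
    have hx : x ∈ W (⟨u, hub⟩, n) := by
      change x ∈ connectedComponentIn u (d n)
      rw [← connectedComponentIn_eq hn]
      exact mem_connectedComponentIn hxu
    exact mem_iUnion.2 ⟨(⟨u, hub⟩, n), hx, not_isPreconnected_diff_singleton_of_subset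
      hU.isPreconnected hcut (hWo _) hx ((connectedComponentIn_subset _ _).trans huU)⟩
  refine ⟨W k, hWo k, ⟨?_, isPreconnected_connectedComponentIn⟩, fun hc => hk ?_⟩
  · by_contra hne
    exact hk (countable_empty.mono fun x hx => hne ⟨x, hx.1⟩)
  · refine (hc.image Subtype.val).mono ?_
    rintro x ⟨hx, hx'⟩
    refine ⟨⟨x, hx⟩, fun hp => hx' ?_, rfl⟩
    convert hp.image Subtype.val continuous_subtype_val.continuousOn using 1
    ext y
    simp [and_comm]

/-- Every Peano continuum with uncountably many local cut points is a topological
fractal, witnessed by a family of at most three maps. -/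
theorem peano_uncountably_many_local_cut_points_is_topological_fractal
    (X : Type*) [MetricSpace X] [CompactSpace X] [ConnectedSpace X]
    [LocallyConnectedSpace X] [Nonempty X]
    (h : ¬ ({x : X | IsLocalCutPoint x}).Countable) :
    ∃ F : Set (X → X), F.Finite ∧ F.ncard ≤ 3 ∧ (∀ f ∈ F, Continuous f) ∧
      TopContractive F ∧ (⋃ f ∈ F, Set.range f) = Set.univ := by
  obtain ⟨V, hVo, hVc, hV⟩ := exists_isOpen_not_countable_cutPoints h
  have : ConnectedSpace V := isConnected_iff_connectedSpace.1 hVc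
  have : LocallyConnectedSpace V := hVo.locallyConnectedSpace
  have : LocallyCompactSpace V := hVo.locallyCompactSpace
  obtain ⟨g, hg, ⟨a, ha⟩, ⟨b, hb⟩, hcut⟩ := exists_continuous_separated_levels hV
  have hbad := countable_not_subsingleton_fibers hg (a := a) (b := b) hcut
  obtain ⟨s, t, c₀, c₁, hs, hst, ht, hc₀, hc₁, hcomp, hpre⟩ := exists_compact_band hg ha hb hbad
  rw [ha, hb] at hbad
  set S : Set V := g ⁻¹' Icc s t with hS
  have hband : S \ {c₀, c₁} = g ⁻¹' Ioo s t := by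
    ext y
    simp only [hS, Set.mem_sdiff, mem_preimage, mem_Icc, mem_Ioo, mem_insert_iff, mem_singleton_iff,
      ← hc₀, ← hc₁, lt_iff_le_and_ne, not_or, ne_eq, eq_comm (a := s)]
    tauto
  have hc₀S : c₀ ∈ S := by simp [hS, (hc₀ c₀).2 rfl, hst.le]
  have hc₁S : c₁ ∈ S := by simp [hS, (hc₁ c₁).2 rfl, hst.le]
  have : CompactSpace S := isCompact_iff_compactSpace.1 hcomp
  have : ConnectedSpace S := isConnected_iff_connectedSpace.1 ⟨⟨c₀, hc₀S⟩, hpre⟩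
  have : LocallyConnectedSpace S := hcomp.isClosed.locallyConnectedSpace_of_finite_boundary
    (toFinite {c₀, c₁}) (hband ▸ isOpen_Ioo.preimage hg)
  have hst' : 0 < t - s := sub_pos.2 hst
  let T : Set ℝ := {u | u ∈ Ioo (0 : ℝ) 1 ∧ ¬ {y | g y = s + u * (t - s)}.Subsingleton}
  refine exists_three_contractive_of_generalized_arc (Y := S)
    (j := fun y => ((y : V) : X)) (g := fun y => (g y - s) / (t - s)) (T := T)
    (c₀ := ⟨c₀, hc₀S⟩) (c₁ := ⟨c₁, hc₁S⟩) (by fun_prop)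
    (Subtype.val_injective.comp Subtype.val_injective) (by fun_prop) ?_ ?_ ?_ ?_ (fun u hu => hu.1)
    ?_ ?_
  · simp [(hc₀ c₀).2 rfl]
  · simp [(hc₁ c₁).2 rfl, hst'.ne']
  · intro y
    have hy : g y ∈ Icc s t := y.2
    exact ⟨div_nonneg (sub_nonneg.2 hy.1) hst'.le,
      (div_le_one hst').2 (sub_le_sub_right hy.2 s)⟩
  · refine (hbad.preimage_of_injOn (f := fun u => s + u * (t - s)) ?_).mono ?_
    · intro u _ v _ huv
      simpa [hst'.ne'] using huv
    · rintro u ⟨⟨hu0, hu1⟩, hu⟩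
      refine ⟨⟨?_, ?_⟩, hu⟩ <;> nlinarith
  · intro y y' hyy' hy
    have hy0 : g y ∈ Icc s t := y.2
    have hgg : g y' = g y := by
      have := (div_left_inj' hst'.ne').1 hyy'
      linarith
    apply Subtype.ext
    rcases eq_or_lt_of_le hy0.1 with h0 | h0
    · rw [(hc₀ y).1 h0.symm, (hc₀ y').1 (hgg.trans h0.symm)]
    rcases eq_or_lt_of_le hy0.2 with h1 | h1
    · rw [(hc₁ y).1 h1, (hc₁ y').1 (hgg.trans h1)]
    have hsub : {z | g z = g y}.Subsingleton := by
      by_contra hsub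
      refine hy ⟨⟨div_pos (sub_pos.2 h0) hst', (div_lt_one hst').2 (sub_lt_sub_right h1 s)⟩, ?_⟩
      rwa [div_mul_cancel₀ _ hst'.ne', add_sub_cancel]
    exact hsub rfl hgg
  · convert hVo.isOpenMap_subtype_val _ (isOpen_Ioo.preimage hg (t := Ioo s t)) using 1
    ext x
    constructor
    · rintro ⟨y, ⟨h0, h1⟩, rfl⟩
      refine ⟨y, ⟨?_, ?_⟩, rfl⟩
      · simpa [hst'] using h0
      · have := (div_lt_one hst').1 h1
        linarith
    · rintro ⟨y, ⟨h0, h1⟩, rfl⟩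
      exact ⟨⟨y, h0.le, h1.le⟩, ⟨div_pos (sub_pos.2 h0) hst',
        (div_lt_one hst').2 (sub_lt_sub_right h1 s)⟩, rfl⟩
end

section
/- Let X be a Peano continuum having uncountably many cut points. Then X is a topological fractal with witnessing number two, i.e., there exist two continuous self-maps f, g of X such that {f, g} is topologically contractive and f(X) ∪ g(X) = X. -/
/-- `x` is a cut point of the connected space `X` if `X \ {x}` is not connected. -/
def IsCutPoint {X : Type*} [TopologicalSpace X] (x : X) : Prop :=
  ¬ IsPreconnected ({x}ᶜ : Set X)

open Set Filter Topology

/-- In a finite type with a reflexive relation for which any two points are linked by a path, there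
are eventually constant walks between any two points that visit everything. -/
theorem exists_walk_visiting {α : Type*} [Finite α] {R : α → α → Prop} (hrefl : ∀ a, R a a)
    (hconn : ∀ a b, Relation.ReflTransGen R a b) (u v : α) :
    ∃ (c : ℕ → α) (K : ℕ), c 0 = u ∧ (∀ j ≥ K, c j = v) ∧ (∀ j, R (c j) (c (j + 1))) ∧
      ∀ w, ∃ j, c j = w := by
  classical
  have concat : ∀ (c₁ c₂ : ℕ → α) (K₁ K₂ : ℕ) (w v : α), (∀ j ≥ K₁, c₁ j = w) → c₂ 0 = w →
      (∀ j ≥ K₂, c₂ j = v) → (∀ j, R (c₁ j) (c₁ (j + 1))) → (∀ j, R (c₂ j) (c₂ (j + 1))) →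
      ∃ (c : ℕ → α) (K : ℕ), c 0 = c₁ 0 ∧ (∀ j ≥ K, c j = v) ∧ (∀ j, R (c j) (c (j + 1))) ∧
        ∀ j, ∃ i, c i = c₂ j := by
    intro c₁ c₂ K₁ K₂ w v h₁ h₀ h₂ r₁ r₂
    refine ⟨fun j => if j < K₁ then c₁ j else c₂ (j - K₁), K₁ + K₂, ?_, ?_, ?_, ?_⟩
    · by_cases h : 0 < K₁
      · simp [h]
      · have : K₁ = 0 := by omega
        subst this
        simp [h₀, h₁ 0 le_rfl]
    · intro j hj
      simp only [if_neg (show ¬ j < K₁ by omega)]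
      exact h₂ _ (by omega)
    · intro j
      by_cases h : j + 1 < K₁
      · simp [h, show j < K₁ by omega, r₁]
      · by_cases h' : j < K₁
        · have hK : j + 1 = K₁ := by omega
          have := r₁ j
          rw [h₁ (j + 1) hK.ge] at this
          simpa [h, h', hK, h₀] using this
        · have hK : j + 1 - K₁ = (j - K₁) + 1 := by omega
          simp only [h, h', if_false, hK]
          exact r₂ _
    · exact fun j => ⟨K₁ + j, by simp⟩
  have joined : ∀ u v, ∃ (c : ℕ → α) (K : ℕ), c 0 = u ∧ (∀ j ≥ K, c j = v) ∧
      ∀ j, R (c j) (c (j + 1)) := by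
    intro u v
    induction hconn u v with
    | refl => exact ⟨fun _ => u, 0, rfl, fun _ _ => rfl, fun _ => hrefl u⟩
    | @tail b v' _ hbc ih =>
      obtain ⟨c, K, h0, hK, hR⟩ := ih
      obtain ⟨c', K', h0', hK', hR', -⟩ := concat c (fun j => if j = 0 then b else v') K 1 b v' hK
        rfl (fun j hj => if_neg (by omega)) hR (fun j => by
          by_cases h : j = 0
          · simp [h, hbc]
          · simp [h, hrefl])
      exact ⟨c', K', h0'.trans h0, hK', hR'⟩
  have key : ∀ (A : Finset α) (u : α), ∃ (c : ℕ → α) (K : ℕ), c 0 = u ∧ (∀ j ≥ K, c j = v) ∧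
      (∀ j, R (c j) (c (j + 1))) ∧ ∀ w ∈ A, ∃ j, c j = w := by
    intro A
    induction A using Finset.induction_on with
    | empty =>
      intro u
      obtain ⟨c, K, h0, hK, hR⟩ := joined u v
      exact ⟨c, K, h0, hK, hR, by simp⟩
    | insert w A _ ih =>
      intro u
      obtain ⟨c₁, K₁, h0₁, hK₁, hR₁⟩ := joined u w
      obtain ⟨c₂, K₂, h0₂, hK₂, hR₂, hA⟩ := ih w
      obtain ⟨c, K, h0, hK, hR, hv⟩ := concat c₁ c₂ K₁ K₂ w v hK₁ h0₂ hK₂ hR₁ hR₂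
      refine ⟨c, K, h0.trans h0₁, hK, hR, fun x hx => ?_⟩
      rcases Finset.mem_insert.1 hx with rfl | hx
      · exact (hv 0).imp fun i hi => hi.trans h0₂
      · obtain ⟨j, rfl⟩ := hA x hx
        exact hv j
  cases nonempty_fintype α
  obtain ⟨c, K, h0, hK, hR, hv⟩ := key Finset.univ u
  exact ⟨c, K, h0, hK, hR, fun w => hv w (Finset.mem_univ w)⟩

/-- Members of an open cover which meet a preconnected set are linked by chains of such members. -/
theorem reflTransGen_of_isPreconnected {X : Type*} [TopologicalSpace X] {𝒱 : Set (Set X)}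
    (hopen : ∀ V ∈ 𝒱, IsOpen V) (hcov : ⋃₀ 𝒱 = univ) {C : Set X} (hC : IsPreconnected C)
    (V₀ V₁ : {V // V ∈ 𝒱 ∧ (C ∩ V).Nonempty}) :
    Relation.ReflTransGen (fun V W : {V // V ∈ 𝒱 ∧ (C ∩ V).Nonempty} =>
      (V.1 ∩ W.1).Nonempty) V₀ V₁ := by
  by_contra hV₁
  set r := Relation.ReflTransGen (fun V W : {V // V ∈ 𝒱 ∧ (C ∩ V).Nonempty} =>
      (V.1 ∩ W.1).Nonempty) V₀ with hr
  obtain ⟨z, -, ⟨A, ⟨V, rfl⟩, ⟨_, ⟨hV, rfl⟩, hzV⟩⟩, ⟨B, ⟨W, rfl⟩, ⟨_, ⟨hW, rfl⟩, hzW⟩⟩⟩ :=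
    hC (⋃ V, ⋃ (_ : r V), V.1) (⋃ V, ⋃ (_ : ¬ r V), V.1)
      (isOpen_iUnion fun V => isOpen_iUnion fun _ => hopen _ V.2.1)
      (isOpen_iUnion fun V => isOpen_iUnion fun _ => hopen _ V.2.1)
      (fun x hx => by
        obtain ⟨V, hV, hxV⟩ : x ∈ ⋃₀ 𝒱 := hcov ▸ mem_univ x
        by_cases h : r ⟨V, hV, x, hx, hxV⟩
        · exact Or.inl (mem_iUnion₂.2 ⟨_, h, hxV⟩)
        · exact Or.inr (mem_iUnion₂.2 ⟨_, h, hxV⟩))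
      (V₀.2.2.mono fun x hx => ⟨hx.1, mem_iUnion₂.2 ⟨V₀, Relation.ReflTransGen.refl, hx.2⟩⟩)
      (V₁.2.2.mono fun x hx => ⟨hx.1, mem_iUnion₂.2 ⟨V₁, hV₁, hx.2⟩⟩)
  exact hW (Relation.ReflTransGen.tail hV ⟨z, hzV, hzW⟩)

/-- A chain of connected sets can be refined to a chain of members of a finite open cover, every link
being replaced by the same number of new links. -/
theorem exists_refined_chain {X : Type*} [TopologicalSpace X] {𝒱 𝒲 : Set (Set X)}
    (h𝒱fin : 𝒱.Finite) (h𝒱conn : ∀ V ∈ 𝒱, IsConnected V) (h𝒱cov : ⋃₀ 𝒱 = univ)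
    (h𝒲fin : 𝒲.Finite) (h𝒲open : ∀ V ∈ 𝒲, IsOpen V) (h𝒲conn : ∀ V ∈ 𝒲, IsConnected V)
    (h𝒲cov : ⋃₀ 𝒲 = univ) {N : ℕ} {c : ℕ → Set X} (hc : ∀ i, c i ∈ 𝒱)
    (hchain : ∀ i, (c i ∩ c (i + 1)).Nonempty) (hall : ∀ V ∈ 𝒱, ∃ i < N, c i = V) :
    ∃ k > 0, ∃ c' : ℕ → Set X, (∀ j, c' j ∈ 𝒲) ∧ (∀ j, (c' j ∩ c' (j + 1)).Nonempty) ∧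
      (∀ W ∈ 𝒲, ∃ j < N * k, c' j = W) ∧ ∀ j, (c (j / k) ∩ c' j).Nonempty := by
  have walks : ∀ᶠ k in atTop, ∀ V ∈ 𝒱, ∀ W₀ ∈ 𝒲, ∀ W₁ ∈ 𝒲, (V ∩ W₀).Nonempty →
      (V ∩ W₁).Nonempty → ∃ w : ℕ → Set X, w 0 = W₀ ∧ w (k - 1) = W₁ ∧
        (∀ j, w j ∈ 𝒲 ∧ (V ∩ w j).Nonempty ∧ (w j ∩ w (j + 1)).Nonempty) ∧
        ∀ W ∈ 𝒲, (V ∩ W).Nonempty → ∃ j < k, w j = W := by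
    rw [eventually_all_finite h𝒱fin]
    intro V hV
    rw [eventually_all_finite h𝒲fin]
    intro W₀ hW₀
    rw [eventually_all_finite h𝒲fin]
    intro W₁ hW₁
    by_cases h₀ : (V ∩ W₀).Nonempty
    swap
    · exact Eventually.of_forall fun _ h => absurd h h₀
    by_cases h₁ : (V ∩ W₁).Nonempty
    swap
    · exact Eventually.of_forall fun _ _ h => absurd h h₁
    have : Finite {W // W ∈ 𝒲 ∧ (V ∩ W).Nonempty} :=
      (h𝒲fin.subset fun W (hW : W ∈ 𝒲 ∧ (V ∩ W).Nonempty) => hW.1).to_subtype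
    obtain ⟨w, K, hw0, hwK, hwR, hwv⟩ := exists_walk_visiting
      (fun W : {W // W ∈ 𝒲 ∧ (V ∩ W).Nonempty} => by
        simpa using W.2.2.mono inter_subset_right)
      (reflTransGen_of_isPreconnected h𝒲open h𝒲cov (h𝒱conn V hV).isPreconnected)
      ⟨W₀, hW₀, h₀⟩ ⟨W₁, hW₁, h₁⟩
    filter_upwards [eventually_ge_atTop (K + 1)] with k hk _ _
    refine ⟨fun j => (w j).1, by simp [hw0], by simp [hwK (k - 1) (by omega)],
      fun j => ⟨(w j).2.1, (w j).2.2, hwR j⟩, fun W hW hVW => ?_⟩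
    obtain ⟨j, hj⟩ := hwv ⟨W, hW, hVW⟩
    by_cases hjk : j < k
    · exact ⟨j, hjk, by simp [hj]⟩
    · refine ⟨k - 1, by omega, ?_⟩
      simp only [hwK (k - 1) (by omega), ← hwK j (by omega), hj]
  obtain ⟨k, hk, hk0⟩ := (walks.and (eventually_gt_atTop 0)).exists
  choose z hz hz' using hchain
  have hex : ∀ i, ∃ W ∈ 𝒲, z i ∈ W := fun i => by
    simpa using (h𝒲cov ▸ mem_univ (z i) : z i ∈ ⋃₀ 𝒲)
  choose e he hze using hex
  have hzpred : ∀ i, z (i - 1) ∈ c i := fun i => by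
    cases i with
    | zero => exact hz 0
    | succ i => exact hz' i
  choose w hw0 hwl hw hwall using fun i => hk (c i) (hc i) (e (i - 1)) (he _) (e i) (he i)
    ⟨_, hzpred i, hze _⟩ ⟨_, hz i, hze i⟩
  refine ⟨k, hk0, fun j => w (j / k) (j % k), fun j => (hw _ _).1, fun j => ?_, fun W hW => ?_,
    fun j => (hw _ _).2.1⟩
  · have hlt := Nat.mod_lt j hk0
    have hdm := Nat.div_add_mod j k
    by_cases h : j % k + 1 < k
    · have h1 : (j + 1) / k = j / k := by
        rw [show j + 1 = k * (j / k) + (j % k + 1) by omega, Nat.mul_add_div hk0,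
          Nat.div_eq_of_lt h, add_zero]
      have h2 : (j + 1) % k = j % k + 1 := by
        have := Nat.div_add_mod (j + 1) k
        rw [h1] at this
        omega
      simp only [h1, h2]
      exact (hw _ _).2.2
    · have h0 : j + 1 = k * (j / k + 1) := by rw [mul_add]; omega
      have h1 : (j + 1) / k = j / k + 1 := by rw [h0, Nat.mul_div_cancel_left _ hk0]
      have h2 : (j + 1) % k = 0 := by rw [h0, Nat.mul_mod_right]
      have h3 : j % k = k - 1 := by omega
      simp only [h1, h2, h3, hwl, hw0, Nat.add_sub_cancel, inter_self]
      exact (h𝒲conn _ (he _)).nonempty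
  · obtain ⟨x, hx⟩ := (h𝒲conn W hW).nonempty
    obtain ⟨V, hV, hxV⟩ : x ∈ ⋃₀ 𝒱 := h𝒱cov ▸ mem_univ x
    obtain ⟨i, hi, rfl⟩ := hall V hV
    obtain ⟨j, hj, rfl⟩ := hwall i W hW ⟨x, hxV, hx⟩
    refine ⟨i * k + j, ?_, ?_⟩
    · calc i * k + j < (i + 1) * k := by rw [add_mul]; omega
        _ ≤ N * k := Nat.mul_le_mul_right k hi
    · have h1 : (i * k + j) / k = i := by
        rw [mul_comm, Nat.mul_add_div hk0, Nat.div_eq_of_lt hj, add_zero]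
      have h2 : (i * k + j) % k = j := by
        rw [mul_comm, Nat.mul_add_mod, Nat.mod_eq_of_lt hj]
      simp only [h1, h2]

/-- A compact locally connected metric space has finite covers by small connected open sets. -/
theorem exists_finite_cover_isConnected {X : Type*} [MetricSpace X] [CompactSpace X]
    [LocallyConnectedSpace X] {ε : ℝ} (hε : 0 < ε) :
    ∃ 𝒱 : Set (Set X), 𝒱.Finite ∧ (∀ V ∈ 𝒱, IsOpen V) ∧ (∀ V ∈ 𝒱, IsConnected V) ∧
      ⋃₀ 𝒱 = univ ∧ ∀ V ∈ 𝒱, ∀ x ∈ V, ∀ y ∈ V, dist x y ≤ ε := by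
  have h : ∀ x : X, ∃ V : Set X, IsOpen V ∧ x ∈ V ∧ IsConnected V ∧ V ⊆ Metric.ball x (ε / 2) := by
    intro x
    obtain ⟨V, hV, ho, hx, hc⟩ := locallyConnectedSpace_iff_subsets_isOpen_isConnected.1
      inferInstance x (Metric.ball x (ε / 2)) (Metric.ball_mem_nhds x (half_pos hε))
    exact ⟨V, ho, hx, hc, hV⟩
  choose V hVo hxV hVc hVb using h
  obtain ⟨t, ht⟩ := isCompact_univ.elim_nhds_subcover V fun x _ => (hVo x).mem_nhds (hxV x)
  refine ⟨V '' (t : Set X), t.finite_toSet.image V, ?_, ?_, ?_, ?_⟩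
  · rintro _ ⟨x, -, rfl⟩
    exact hVo x
  · rintro _ ⟨x, -, rfl⟩
    exact hVc x
  · rw [sUnion_image]
    exact univ_subset_iff.1 (by simpa using ht.2)
  · rintro _ ⟨x, -, rfl⟩ y hy z hz
    have h1 := hVb x hy
    have h2 := hVb x hz
    rw [Metric.mem_ball] at h1 h2
    linarith [dist_triangle_right y z x]

/-- **Hahn–Mazurkiewicz theorem**: a Peano continuum is a continuous image of an interval. -/
theorem exists_continuousOn_image_Icc_eq_univ (X : Type*) [MetricSpace X] [CompactSpace X]
    [ConnectedSpace X] [LocallyConnectedSpace X] :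
    ∃ γ : ℝ → X, ContinuousOn γ (Icc 0 1) ∧ γ '' Icc 0 1 = univ := by
  choose 𝒱 hfin hopen hconn hcov hdist using fun n : ℕ =>
    exists_finite_cover_isConnected (X := X) (ε := (1 / 2) ^ n) (by positivity)
  let P : ℕ → ℕ × (ℕ → Set X) → Prop := fun n s => 0 < s.1 ∧ (∀ i, s.2 i ∈ 𝒱 n) ∧
    (∀ i, (s.2 i ∩ s.2 (i + 1)).Nonempty) ∧ ∀ V ∈ 𝒱 n, ∃ i < s.1, s.2 i = V
  have start : ∃ s, P 0 s := by
    obtain ⟨k, hk, c, h1, h2, h3, -⟩ := exists_refined_chain (𝒱 := {univ}) (finite_singleton _)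
      (by simpa using isConnected_univ) (by simp) (hfin 0) (hopen 0) (hconn 0) (hcov 0)
      (N := 1) (c := fun _ => univ) (by simp) (by simp) (by simp)
    exact ⟨(1 * k, c), by simpa using hk, h1, h2, h3⟩
  have step : ∀ n (s : {s // P n s}), ∃ s' : {s // P (n + 1) s}, ∃ k > 0, s'.1.1 = s.1.1 * k ∧
      ∀ j, (s.1.2 (j / k) ∩ s'.1.2 j).Nonempty := by
    rintro n ⟨⟨N, c⟩, hN, h1, h2, h3⟩
    obtain ⟨k, hk, c', h1', h2', h3', h4⟩ := exists_refined_chain (hfin n) (hconn n) (hcov n)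
      (hfin (n + 1)) (hopen _) (hconn _) (hcov _) h1 h2 h3
    exact ⟨⟨(N * k, c'), Nat.mul_pos hN hk, h1', h2', h3'⟩, k, hk, rfl, h4⟩
  choose next k hk hnext hmeet using step
  obtain ⟨s₀, hs₀⟩ := start
  let s : ∀ n, {s // P n s} := fun n => Nat.rec ⟨s₀, hs₀⟩ (fun n s => next n s) n
  let N : ℕ → ℕ := fun n => (s n).1.1
  let c : ℕ → ℕ → Set X := fun n => (s n).1.2
  have hN : ∀ n, 0 < N n := fun n => (s n).2.1
  have hc : ∀ n i, c n i ∈ 𝒱 n := fun n => (s n).2.2.1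
  have hchain : ∀ n i, (c n i ∩ c n (i + 1)).Nonempty := fun n => (s n).2.2.2.1
  have hall : ∀ n, ∀ V ∈ 𝒱 n, ∃ i < N n, c n i = V := fun n => (s n).2.2.2.2
  have hNk : ∀ n, N (n + 1) = N n * k n (s n) := fun n => hnext n (s n)
  have hck : ∀ n j, (c n (j / k n (s n)) ∩ c (n + 1) j).Nonempty := fun n => hmeet n (s n)
  clear_value N c
  choose y hy using fun n i => (hconn n _ (hc n i)).nonempty
  let f : ℝ → ℕ → X := fun x n => y n ⌊(N n : ℝ) * x⌋₊
  have hf : ∀ x n, dist (f x n) (f x (n + 1)) ≤ 4 / 2 / 2 ^ n := by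
    intro x n
    obtain ⟨z, hz1, hz2⟩ := hck n ⌊(N (n + 1) : ℝ) * x⌋₊
    have hfl : ⌊(N (n + 1) : ℝ) * x⌋₊ / k n (s n) = ⌊(N n : ℝ) * x⌋₊ := by
      rw [← Nat.floor_div_natCast, hNk]
      congr 1
      have : (k n (s n) : ℝ) ≠ 0 := by exact_mod_cast (hk n (s n)).ne'
      push_cast
      field_simp
    rw [hfl] at hz1
    have d1 := hdist n _ (hc n _) _ (hy n ⌊(N n : ℝ) * x⌋₊) z hz1
    have d2 := hdist (n + 1) _ (hc (n + 1) _) z hz2 _ (hy (n + 1) ⌊(N (n + 1) : ℝ) * x⌋₊)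
    have h4 : (4 : ℝ) / 2 / 2 ^ n = 2 * (1 / 2) ^ n := by rw [one_div, inv_pow]; ring
    have hp : (0 : ℝ) < (1 / 2) ^ n := by positivity
    rw [h4]
    calc dist (f x n) (f x (n + 1)) ≤ dist (f x n) z + dist z (f x (n + 1)) := dist_triangle _ _ _
      _ ≤ (1 / 2) ^ n + (1 / 2) ^ (n + 1) := add_le_add d1 d2
      _ ≤ 2 * (1 / 2) ^ n := by rw [pow_succ]; linarith
  choose γ hγ using fun x => cauchySeq_tendsto_of_complete (cauchySeq_of_le_geometric_two (hf x))
  have hfγ : ∀ x n, dist (f x n) (γ x) ≤ 4 * (1 / 2) ^ n := fun x n => by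
    have := dist_le_of_le_geometric_two_of_tendsto (hf x) (hγ x) n
    rwa [div_eq_mul_one_div, ← one_div_pow] at this
  have small : ∀ ε > (0 : ℝ), ∃ n : ℕ, 10 * (1 / 2 : ℝ) ^ n < ε := by
    intro ε hε
    obtain ⟨n, hn⟩ := exists_pow_lt_of_lt_one (show 0 < ε / 10 by positivity)
      (show (1 / 2 : ℝ) < 1 by norm_num)
    exact ⟨n, by linarith⟩
  have hγc : ContinuousOn γ (Icc 0 1) := by
    have key : ∀ n, ∀ x x' : ℝ, 0 ≤ x → x ≤ x' → x' - x < 1 / N n →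
        dist (γ x) (γ x') ≤ 10 * (1 / 2) ^ n := by
      intro n x x' hx hxx' hlt
      have hNpos : (0 : ℝ) < N n := by exact_mod_cast hN n
      have hp : (0 : ℝ) < (1 / 2) ^ n := by positivity
      have hNx : (N n : ℝ) * x' < N n * x + 1 := by
        rw [lt_div_iff₀ hNpos] at hlt
        linarith
      have h1 : ⌊(N n : ℝ) * x⌋₊ ≤ ⌊(N n : ℝ) * x'⌋₊ := Nat.floor_mono (by gcongr)
      have h2 : ⌊(N n : ℝ) * x'⌋₊ ≤ ⌊(N n : ℝ) * x⌋₊ + 1 := by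
        rw [← Nat.floor_add_one (by positivity)]
        exact Nat.floor_mono hNx.le
      have hff : dist (f x n) (f x' n) ≤ 2 * (1 / 2) ^ n := by
        rcases (show ⌊(N n : ℝ) * x'⌋₊ = ⌊(N n : ℝ) * x⌋₊ ∨
          ⌊(N n : ℝ) * x'⌋₊ = ⌊(N n : ℝ) * x⌋₊ + 1 by omega) with h | h
        · simp only [f, h, dist_self]
          positivity
        · obtain ⟨z, hz1, hz2⟩ := hchain n ⌊(N n : ℝ) * x⌋₊
          have d1 := hdist n _ (hc n _) _ (hy n _) z hz1
          have d2 := hdist n _ (hc n _) z hz2 _ (hy n _)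
          simp only [f, h]
          linarith [dist_triangle (y n ⌊(N n : ℝ) * x⌋₊) z (y n (⌊(N n : ℝ) * x⌋₊ + 1))]
      have t1 := hfγ x n
      have t2 := hfγ x' n
      rw [dist_comm] at t1
      linarith [dist_triangle4 (γ x) (f x n) (f x' n) (γ x')]
    rw [Metric.continuousOn_iff]
    intro x hx ε hε
    obtain ⟨n, hn⟩ := small ε hε
    have hNpos : (0 : ℝ) < N n := by exact_mod_cast hN n
    refine ⟨1 / N n, by positivity, fun x' hx' hd => ?_⟩
    rw [Real.dist_eq, abs_lt] at hd
    rcases le_total x x' with h | h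
    · rw [dist_comm]
      exact (key n x x' hx.1 h hd.2).trans_lt hn
    · exact (key n x' x hx'.1 h (by linarith)).trans_lt hn
  refine ⟨γ, hγc, eq_univ_of_forall fun x => ?_⟩
  rw [← (isCompact_Icc.image_of_continuousOn hγc).isClosed.closure_eq, Metric.mem_closure_iff]
  intro ε hε
  obtain ⟨n, hn⟩ := small ε hε
  obtain ⟨V, hV, hxV⟩ : x ∈ ⋃₀ 𝒱 n := hcov n ▸ mem_univ x
  obtain ⟨i, hi, rfl⟩ := hall n V hV
  have hNpos : (0 : ℝ) < N n := by exact_mod_cast hN n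
  have hfl : ⌊(N n : ℝ) * (i / N n)⌋₊ = i := by
    rw [mul_div_cancel₀ _ hNpos.ne', Nat.floor_natCast]
  refine ⟨_, ⟨(i : ℝ) / N n, ⟨by positivity, ?_⟩, rfl⟩, ?_⟩
  · rw [div_le_one hNpos]
    exact_mod_cast hi.le
  · have t1 := hfγ (i / N n) n
    have t2 := hdist n _ hV x hxV _ (hy n i)
    simp only [f, hfl] at t1
    have hp : (0 : ℝ) < (1 / 2) ^ n := by positivity
    linarith [dist_triangle x (y n i) (γ (i / N n))]

/-- Any two points of a Peano continuum are the endpoints of a path through all points. -/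
theorem exists_path_surjective {X : Type*} [MetricSpace X] [CompactSpace X]
    [ConnectedSpace X] [LocallyConnectedSpace X] (a b : X) :
    ∃ γ : Path a b, Function.Surjective γ := by
  obtain ⟨g, hg, hgs⟩ := exists_continuousOn_image_Icc_eq_univ X
  let γ₀ : Path (g 0) (g 1) :=
    { toFun := fun t => g t
      continuous_toFun := hg.domRestrict
      source' := by simp
      target' := by simp }
  have hγ₀ : range γ₀ = univ := by
    rw [← hgs, image_eq_range]
    rfl
  have hj : ∀ x y : X, Joined x y := by
    have : PathConnectedSpace X := by
      rw [pathConnectedSpace_iff_univ, ← hgs]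
      exact ((convex_Icc (0 : ℝ) 1).isPathConnected ⟨0, by simp⟩).image' hg
    exact PathConnectedSpace.joined
  obtain ⟨γ₁⟩ := hj a (g 0)
  obtain ⟨γ₂⟩ := hj (g 1) b
  refine ⟨(γ₁.trans γ₀).trans γ₂, ?_⟩
  rw [← range_eq_univ, Path.trans_range, Path.trans_range, hγ₀]
  simp

/-- The measure of a set of natural numbers in which `n` has mass `1 / 2 ^ (n + 1)`. -/
noncomputable def geometricMass (A : Set ℕ) : ℝ :=
  ∑' n, A.indicator (fun n => (1 : ℝ) / 2 / 2 ^ n) n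

theorem summable_indicator_geometric (A : Set ℕ) :
    Summable (A.indicator fun n => (1 : ℝ) / 2 / 2 ^ n) :=
  (summable_geometric_two' 1).indicator A

theorem geometricMass_empty : geometricMass ∅ = 0 := by
  simp [geometricMass]

theorem geometricMass_univ : geometricMass univ = 1 := by
  simp only [geometricMass, indicator_univ, tsum_geometric_two']

theorem geometricMass_mono {A B : Set ℕ} (h : A ⊆ B) : geometricMass A ≤ geometricMass B :=
  (summable_indicator_geometric A).tsum_le_tsum
    (fun n => indicator_le_indicator_of_subset h (fun n => by positivity) n)
    (summable_indicator_geometric B)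

theorem geometricMass_add_le {A B : Set ℕ} (h : A ⊆ B) {n : ℕ} (hA : n ∉ A) (hB : n ∈ B) :
    geometricMass A + 1 / 2 / 2 ^ n ≤ geometricMass B := by
  have hn : ∑' m, ({n} : Set ℕ).indicator (fun n => (1 : ℝ) / 2 / 2 ^ n) m = 1 / 2 / 2 ^ n := by
    rw [tsum_eq_single n fun m hm => by simp [hm]]
    simp
  rw [geometricMass, ← hn, ← (summable_indicator_geometric A).tsum_add
    (summable_indicator_geometric {n})]
  refine ((summable_indicator_geometric A).add (summable_indicator_geometric {n})).tsum_le_tsum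
    (fun m => ?_) (summable_indicator_geometric B)
  rw [← congrFun (indicator_union_of_disjoint (disjoint_singleton_right.2 hA)
    fun n => (1 : ℝ) / 2 / 2 ^ n) m]
  exact indicator_le_indicator_of_subset (union_subset h (by simpa using hB))
    (fun n => by positivity) m

theorem geometricMass_lt {A B : Set ℕ} (h : A ⊆ B) {n : ℕ} (hA : n ∉ A) (hB : n ∈ B) :
    geometricMass A < geometricMass B := by
  have : (0 : ℝ) < 1 / 2 / 2 ^ n := by positivity
  linarith [geometricMass_add_le h hA hB]

/-- Every uncountable set of reals contains an order-isomorphic copy of the rationals. -/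
theorem exists_strictMono_rat_of_not_countable_s1 {T : Set ℝ} (hT : ¬ T.Countable) :
    ∃ e : ℚ → ℝ, StrictMono e ∧ ∀ q, e q ∈ T := by
  let T' : Set ℝ := {x ∈ T | ∀ y > x, ¬ (T ∩ Ioo x y).Countable}
  have hdiff : (T \ T').Countable := by
    have hS : ∀ q : ℚ, {x ∈ T | x < q ∧ (T ∩ Ioo x q).Countable}.Countable := by
      intro q
      set S := {x ∈ T | x < q ∧ (T ∩ Ioo x q).Countable} with hSdef
      obtain ⟨D, hDS, hD, hDU⟩ := TopologicalSpace.isOpen_biUnion_countable S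
        (fun x : ℝ => Ioo x (q : ℝ)) fun _ _ => isOpen_Ioo
      have hc : (⋃ x ∈ D, T ∩ Ioo x q).Countable := hD.biUnion fun x hx => (hDS hx).2.2
      have hsub : {z ∈ S | ∀ x ∈ S, z ≤ x}.Subsingleton := fun x hx y hy =>
        le_antisymm (hx.2 y hy.1) (hy.2 x hx.1)
      refine (hc.union hsub.countable).mono fun z hz => ?_
      by_cases h : ∀ x ∈ S, z ≤ x
      · exact Or.inr ⟨hz, h⟩
      · push Not at h
        obtain ⟨x, hx, hxz⟩ := h
        left
        rw [← inter_iUnion₂, hDU]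
        exact ⟨hz.1, mem_iUnion₂.2 ⟨x, hx, hxz, hz.2.1⟩⟩
    refine (countable_iUnion hS).mono fun x hx => ?_
    have : ∃ y > x, (T ∩ Ioo x y).Countable := by
      by_contra h
      push Not at h
      exact hx.2 ⟨hx.1, h⟩
    obtain ⟨y, hy, hc⟩ := this
    obtain ⟨q, hxq, hqy⟩ := exists_rat_btwn hy
    exact mem_iUnion.2 ⟨q, hx.1, hxq, hc.mono (inter_subset_inter_right T
      (Ioo_subset_Ioo_right hqy.le))⟩
  have hT' : ¬ T'.Countable := fun h => hT ((h.union hdiff).mono fun x hx => by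
    by_cases hx' : x ∈ T'
    · exact Or.inl hx'
    · exact Or.inr ⟨hx, hx'⟩)
  have : DenselyOrdered T' := ⟨fun x y hxy => by
    have h : ¬ ((T ∩ Ioo x.1 y.1) ⊆ T \ T') := fun h => x.2.2 y.1 hxy (hdiff.mono h)
    obtain ⟨z, hz, hz'⟩ := not_subset.1 h
    have hzT : z ∈ T' := by
      by_contra h
      exact hz' ⟨hz.1, h⟩
    exact ⟨⟨z, hzT⟩, hz.2.1, hz.2.2⟩⟩
  have : Nontrivial T' := by
    rw [nontrivial_coe_sort]
    by_contra h
    exact hT' (not_nontrivial_iff.1 h).countable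
  obtain ⟨e⟩ := Order.embedding_from_countable_to_dense ℚ T'
  exact ⟨fun q => e q, fun x y h => e.strictMono h, fun q => (e q).2.1⟩

section CutPoints

variable {X : Type*} [TopologicalSpace X] [T1Space X] [LocallyConnectedSpace X]

theorem isOpen_connectedComponentIn_compl_singleton (p a : X) :
    IsOpen (connectedComponentIn {p}ᶜ a) :=
  isOpen_compl_singleton.connectedComponentIn

theorem frontier_connectedComponentIn_compl_singleton_subset (p a : X) :
    frontier (connectedComponentIn {p}ᶜ a) ⊆ {p} := by
  rintro x ⟨hx, hx'⟩
  rw [(isOpen_connectedComponentIn_compl_singleton p a).interior_eq] at hx'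
  by_contra hxp
  obtain ⟨z, hz, hz'⟩ := mem_closure_iff.1 hx _ (isOpen_connectedComponentIn_compl_singleton p x)
    (mem_connectedComponentIn hxp)
  rw [connectedComponentIn_eq hz', ← connectedComponentIn_eq hz] at hx'
  exact hx' (mem_connectedComponentIn hxp)

theorem closure_connectedComponentIn_compl_singleton_subset (p a : X) :
    closure (connectedComponentIn {p}ᶜ a) ⊆ insert p (connectedComponentIn {p}ᶜ a) := by
  rw [closure_eq_self_union_frontier, insert_eq, union_comm]
  exact union_subset_union_left _ (frontier_connectedComponentIn_compl_singleton_subset p a)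

/-- If a separable space has uncountably many cut points, uncountably many of them separate the same
pair of points. -/
theorem exists_not_countable_separating [TopologicalSpace.SeparableSpace X] [Nonempty X]
    (h : ¬ {x : X | IsCutPoint x}.Countable) :
    ∃ a b : X, ¬ {p : X | a ≠ p ∧ b ∉ connectedComponentIn {p}ᶜ a}.Countable := by
  by_contra! hcount
  refine h ((countable_iUnion fun n => countable_iUnion fun m =>
    hcount (TopologicalSpace.denseSeq X n) (TopologicalSpace.denseSeq X m)).mono fun p hp => ?_)
  obtain ⟨x, hx, y, hy, hxy⟩ : ∃ x ∈ ({p}ᶜ : Set X), ∃ y ∈ ({p}ᶜ : Set X),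
      y ∉ connectedComponentIn {p}ᶜ x := by
    by_contra! hcon
    exact hp (isPreconnected_of_forall_pair fun x hx y hy =>
      ⟨connectedComponentIn {p}ᶜ x, connectedComponentIn_subset _ _, mem_connectedComponentIn hx,
        hcon x hx y hy, isPreconnected_connectedComponentIn⟩)
  obtain ⟨_, ha, n, rfl⟩ := (TopologicalSpace.denseRange_denseSeq X).inter_open_nonempty _
    (isOpen_connectedComponentIn_compl_singleton p x) ⟨x, mem_connectedComponentIn hx⟩
  obtain ⟨_, hb, m, rfl⟩ := (TopologicalSpace.denseRange_denseSeq X).inter_open_nonempty _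
    (isOpen_connectedComponentIn_compl_singleton p y) ⟨y, mem_connectedComponentIn hy⟩
  refine mem_iUnion.2 ⟨n, mem_iUnion.2 ⟨m, connectedComponentIn_subset _ _ ha, fun hmem => ?_⟩⟩
  rw [← connectedComponentIn_eq ha] at hmem
  rw [connectedComponentIn_eq hmem, ← connectedComponentIn_eq hb] at hxy
  exact hxy (mem_connectedComponentIn hy)

variable [ConnectedSpace X]

theorem mem_closure_connectedComponentIn_compl_singleton {p a : X} (ha : a ≠ p) :
    p ∈ closure (connectedComponentIn {p}ᶜ a) := by
  by_contra hp
  have hcl : IsClopen (connectedComponentIn {p}ᶜ a) :=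
    ⟨closure_subset_iff_isClosed.1 fun x hx =>
      (closure_connectedComponentIn_compl_singleton_subset p a hx).resolve_left
        fun h => hp (h ▸ hx), isOpen_connectedComponentIn_compl_singleton p a⟩
  have hp' : p ∈ connectedComponentIn {p}ᶜ a :=
    hcl.eq_univ ⟨a, mem_connectedComponentIn ha⟩ ▸ mem_univ p
  exact connectedComponentIn_subset _ _ hp' rfl

theorem isPreconnected_compl_connectedComponentIn_compl_singleton (p a : X) :
    IsPreconnected (connectedComponentIn {p}ᶜ a)ᶜ := by
  refine isPreconnected_of_forall p fun x hx => ?_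
  have hpa : p ∈ (connectedComponentIn {p}ᶜ a)ᶜ := fun h => connectedComponentIn_subset _ _ h rfl
  by_cases hxp : x = p
  · subst hxp
    exact ⟨{x}, by simpa using hx, rfl, rfl, isPreconnected_singleton⟩
  · refine ⟨closure (connectedComponentIn {p}ᶜ x), fun y hy => ?_,
      mem_closure_connectedComponentIn_compl_singleton hxp,
      subset_closure (mem_connectedComponentIn hxp), isPreconnected_connectedComponentIn.closure⟩
    rcases closure_connectedComponentIn_compl_singleton_subset p x hy with rfl | hy
    · exact hpa
    · intro hya
      rw [connectedComponentIn_eq hya, ← connectedComponentIn_eq hy] at hx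
      exact hx (mem_connectedComponentIn hxp)

/-- The components of `a` in the complements of the points separating `a` from `b` form a chain. -/
theorem closure_connectedComponentIn_subset_or {a b p q : X} (hpq : p ≠ q) (hap : a ≠ p)
    (haq : a ≠ q) (hbp : b ∉ connectedComponentIn {p}ᶜ a) (hbq : b ∉ connectedComponentIn {q}ᶜ a) :
    closure (connectedComponentIn {p}ᶜ a) ⊆ connectedComponentIn {q}ᶜ a ∨
      closure (connectedComponentIn {q}ᶜ a) ⊆ connectedComponentIn {p}ᶜ a := by
  have key : ∀ p q : X, p ≠ q → a ≠ p → q ∉ connectedComponentIn {p}ᶜ a →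
      closure (connectedComponentIn {p}ᶜ a) ⊆ connectedComponentIn {q}ᶜ a := by
    intro p q hpq hap hq
    have hsub : connectedComponentIn {p}ᶜ a ⊆ connectedComponentIn {q}ᶜ a :=
      isPreconnected_connectedComponentIn.subset_connectedComponentIn
        (mem_connectedComponentIn hap) fun x hx hxq => hq (hxq ▸ hx)
    have hp := closure_connectedComponentIn_compl_singleton_subset q a
      (closure_mono hsub (mem_closure_connectedComponentIn_compl_singleton hap))
    exact (closure_connectedComponentIn_compl_singleton_subset p a).trans
      (insert_subset (hp.resolve_left hpq) hsub)
  by_cases hq : q ∈ connectedComponentIn {p}ᶜ a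
  swap
  · exact Or.inl (key p q hpq hap hq)
  by_cases hp : p ∈ connectedComponentIn {q}ᶜ a
  swap
  · exact Or.inr (key q p hpq.symm haq hp)
  refine absurd ?_ hbq
  rw [connectedComponentIn_eq hp]
  exact (isPreconnected_compl_connectedComponentIn_compl_singleton p a).subset_connectedComponentIn
    (fun h => connectedComponentIn_subset _ _ h rfl) (fun x hx (hxq : x = q) => hx (hxq ▸ hq)) hbp

/-- Uncountably many cut points yield a chain of open sets, indexed by the rationals, each with at
most one point in its frontier. -/
theorem exists_rat_chain_isOpen [TopologicalSpace.SeparableSpace X]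
    (h : ¬ {x : X | IsCutPoint x}.Countable) :
    ∃ (a b : X) (U : ℚ → Set X), (∀ q, IsOpen (U q)) ∧ (∀ q, ∃ p, frontier (U q) ⊆ {p}) ∧
      (∀ q, a ∈ U q) ∧ (∀ q, b ∉ U q) ∧ ∀ q r, q < r → closure (U q) ⊆ U r := by
  obtain ⟨a, b, hE⟩ := exists_not_countable_separating h
  set E := {p : X | a ≠ p ∧ b ∉ connectedComponentIn {p}ᶜ a} with hEdef
  let d := TopologicalSpace.denseSeq X
  let pos : X → ℝ := fun p => geometricMass {n | d n ∈ connectedComponentIn {p}ᶜ a}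
  have hpos : ∀ p ∈ E, ∀ q ∈ E,
      closure (connectedComponentIn {p}ᶜ a) ⊆ connectedComponentIn {q}ᶜ a → pos p < pos q := by
    intro p hp q hq hpq
    have hne : (connectedComponentIn {q}ᶜ a \ closure (connectedComponentIn {p}ᶜ a)).Nonempty := by
      by_contra hemp
      have heq := hpq.antisymm (sdiff_eq_empty.1 (not_nonempty_iff_eq_empty.1 hemp))
      have hcl : IsClopen (connectedComponentIn {q}ᶜ a) :=
        ⟨heq ▸ isClosed_closure, isOpen_connectedComponentIn_compl_singleton q a⟩
      exact hq.2 (hcl.eq_univ ⟨a, mem_connectedComponentIn hq.1⟩ ▸ mem_univ b)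
    obtain ⟨_, hx, n, rfl⟩ := (TopologicalSpace.denseRange_denseSeq X).inter_open_nonempty _
      ((isOpen_connectedComponentIn_compl_singleton q a).sdiff isClosed_closure) hne
    exact geometricMass_lt (n := n) (fun m hm => hpq (subset_closure hm))
      (fun hn => hx.2 (subset_closure hn)) hx.1
  have hchain : ∀ p ∈ E, ∀ q ∈ E, p ≠ q →
      closure (connectedComponentIn {p}ᶜ a) ⊆ connectedComponentIn {q}ᶜ a ∨
      closure (connectedComponentIn {q}ᶜ a) ⊆ connectedComponentIn {p}ᶜ a := fun p hp q hq hpq =>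
    closure_connectedComponentIn_subset_or hpq hp.1 hq.1 hp.2 hq.2
  have hinj : InjOn pos E := fun p hp q hq hpq => by
    by_contra hne
    rcases hchain p hp q hq hne with h | h
    · exact (hpos p hp q hq h).ne hpq
    · exact (hpos q hq p hp h).ne' hpq
  obtain ⟨e, he, heE⟩ := exists_strictMono_rat_of_not_countable_s1 (T := pos '' E) fun hc =>
    hE (countable_of_injective_of_countable_image hinj hc)
  choose p hpE hpe using heE
  refine ⟨a, b, fun q => connectedComponentIn {p q}ᶜ a,
    fun q => isOpen_connectedComponentIn_compl_singleton _ _,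
    fun q => ⟨p q, frontier_connectedComponentIn_compl_singleton_subset _ _⟩,
    fun q => mem_connectedComponentIn (hpE q).1, fun q => (hpE q).2, fun q r hqr => ?_⟩
  have hlt : pos (p q) < pos (p r) := by
    rw [hpe, hpe]
    exact he hqr
  refine (hchain _ (hpE q) _ (hpE r) fun heq => hlt.ne (by rw [heq])).resolve_right fun hcl => ?_
  exact (hpos _ (hpE r) _ (hpE q) hcl).not_gt hlt

/-- A space with uncountably many cut points maps onto the unit interval in such a way that any two
levels are separated by an open set with at most one frontier point. -/
theorem exists_level_function [TopologicalSpace.SeparableSpace X]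
    (h : ¬ {x : X | IsCutPoint x}.Countable) :
    ∃ φ : X → ℝ, Continuous φ ∧ range φ = Icc 0 1 ∧ ∀ s t : ℝ, 0 ≤ s → s < t → t ≤ 1 →
      ∃ (U : Set X) (p : X), IsOpen U ∧ frontier U ⊆ {p} ∧ (∀ x, φ x ≤ s → x ∈ U) ∧
        ∀ x ∈ closure U, φ x < t := by
  obtain ⟨a, b, U, hUo, hUf, ha, hb, hU⟩ := exists_rat_chain_isOpen h
  let S : X → Set ℝ := fun x => insert 0 {r | ∃ q : ℚ, r = q ∧ r ∈ Ioo (0 : ℝ) 1 ∧ x ∉ U q}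
  let φ : X → ℝ := fun x => sSup (S x)
  have hS1 : ∀ x, ∀ r ∈ S x, r ≤ 1 := by
    rintro x r (rfl | ⟨q, -, hr, -⟩)
    · exact zero_le_one
    · exact hr.2.le
  have hbdd : ∀ x, BddAbove (S x) := fun x => ⟨1, fun r hr => hS1 x r hr⟩
  have h0 : ∀ x, 0 ≤ φ x := fun x => le_csSup (hbdd x) (mem_insert 0 _)
  have h1 : ∀ x, φ x ≤ 1 := fun x => csSup_le (insert_nonempty _ _) (hS1 x)
  have hle : ∀ x (q : ℚ), 0 < (q : ℝ) → x ∈ U q → φ x ≤ q := by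
    intro x q hq hx
    refine csSup_le (insert_nonempty _ _) ?_
    rintro r (rfl | ⟨q', rfl, -, hxq'⟩)
    · exact hq.le
    · by_contra! hlt
      exact hxq' (hU q q' (by exact_mod_cast hlt) (subset_closure hx))
  have hge : ∀ x (q : ℚ), (q : ℝ) ∈ Ioo (0 : ℝ) 1 → x ∉ U q → (q : ℝ) ≤ φ x := fun x q hq hx =>
    le_csSup (hbdd x) (Or.inr ⟨q, rfl, hq, hx⟩)
  have hsep : ∀ s t : ℝ, 0 ≤ s → s < t → t ≤ 1 → ∃ q : ℚ, (∀ x, φ x ≤ s → x ∈ U q) ∧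
      ∀ x ∈ closure (U q), φ x < t := by
    intro s t hs hst ht
    obtain ⟨q, hsq, hqt⟩ := exists_rat_btwn hst
    obtain ⟨q', hqq', hqt'⟩ := exists_rat_btwn hqt
    refine ⟨q, fun x hx => ?_, fun x hx => ?_⟩
    · by_contra hxq
      linarith [hge x q ⟨by linarith, by linarith⟩ hxq]
    · exact (hle x q' (by linarith) (hU q q' (by exact_mod_cast hqq') hx)).trans_lt hqt'
  have hφ : Continuous φ := by
    refine continuous_iff_continuousAt.2 fun x => tendsto_order.2 ⟨fun s hs => ?_, fun t ht => ?_⟩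
    · by_cases hs0 : s < 0
      · exact Eventually.of_forall fun y => hs0.trans_le (h0 y)
      · push Not at hs0
        obtain ⟨q, hq, hq'⟩ := hsep s (φ x) hs0 hs (h1 x)
        have hx : x ∉ closure (U q) := fun hx => (hq' x hx).false
        filter_upwards [isClosed_closure.isOpen_compl.mem_nhds hx] with y hy
        by_contra! hys
        exact hy (subset_closure (hq y hys))
    · by_cases ht1 : 1 < t
      · exact Eventually.of_forall fun y => (h1 y).trans_lt ht1
      · push Not at ht1
        obtain ⟨q, hq, hq'⟩ := hsep (φ x) t (h0 x) ht ht1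
        filter_upwards [(hUo q).mem_nhds (hq x le_rfl)] with y hy
        exact hq' y (subset_closure hy)
  have hφa : φ a = 0 := by
    refine le_antisymm (le_of_forall_gt fun t ht => ?_) (h0 a)
    obtain ⟨q, hq, hqt⟩ := exists_rat_btwn ht
    exact (hle a q hq (ha q)).trans_lt hqt
  have hφb : φ b = 1 := by
    refine le_antisymm (h1 b) (le_of_forall_lt fun t ht => ?_)
    obtain ⟨q, hq, hq1⟩ := exists_rat_btwn (max_lt ht zero_lt_one)
    exact ((le_max_left _ _).trans_lt hq).trans_le
      (hge b q ⟨(le_max_right _ _).trans_lt hq, hq1⟩ (hb q))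
  refine ⟨φ, hφ, Subset.antisymm ?_ ?_, fun s t hs hst ht => ?_⟩
  · rintro _ ⟨x, rfl⟩
    exact ⟨h0 x, h1 x⟩
  · have := (isPreconnected_range hφ).Icc_subset (mem_range_self a) (mem_range_self b)
    rwa [hφa, hφb] at this
  · obtain ⟨q, hq, hq'⟩ := hsep s t hs hst ht
    obtain ⟨p, hp⟩ := hUf q
    exact ⟨U q, p, hUo q, hp, hq, hq'⟩

end CutPoints

section Levels

variable {X : Type*} [TopologicalSpace X]

/-- If the sublevel set `{φ < t}` is exhausted by open sets with at most one frontier point, then it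
has at most one limit point at level `t`. -/
theorem exists_closure_sublevel_subset [T2Space X] [ConnectedSpace X] [LocallyConnectedSpace X]
    {φ : X → ℝ}
    (hφ : Continuous φ) {t : ℝ} (hlt : ∃ x, φ x < t) (hge : ∃ x, t ≤ φ x)
    (hsep : ∀ x, φ x < t → ∃ (U : Set X) (p : X), IsOpen U ∧ frontier U ⊆ {p} ∧
      (∀ y, φ y ≤ φ x → y ∈ U) ∧ ∀ y ∈ U, φ y < t) :
    ∃ p, φ p = t ∧ closure {x | φ x < t} ⊆ insert p {x | φ x < t} := by
  have hle : ∀ x ∈ closure {x | φ x < t}, φ x ≤ t := fun x hx =>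
    closure_minimal (fun y (hy : φ y < t) => hy.le) (isClosed_le hφ continuous_const) hx
  have huniq : ∀ x ∈ closure {x | φ x < t}, ∀ y ∈ closure {x | φ x < t}, φ x = t → φ y = t →
      x = y := by
    intro x hx y hy hxt hyt
    by_contra hxy
    obtain ⟨A, B, hA, hB, hxA, hyB, hAB⟩ := t2_separation hxy
    obtain ⟨V, hVA, hVo, hxV, hVc⟩ := locallyConnectedSpace_iff_subsets_isOpen_isConnected.1
      inferInstance x A (hA.mem_nhds hxA)
    obtain ⟨W, hWB, hWo, hyW, hWc⟩ := locallyConnectedSpace_iff_subsets_isOpen_isConnected.1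
      inferInstance y B (hB.mem_nhds hyB)
    obtain ⟨v, hvV, hv⟩ := mem_closure_iff.1 hx V hVo hxV
    obtain ⟨w, hwW, hw⟩ := mem_closure_iff.1 hy W hWo hyW
    obtain ⟨z, hzt, hvz, hwz⟩ : ∃ z, φ z < t ∧ φ v ≤ φ z ∧ φ w ≤ φ z := by
      rcases le_total (φ v) (φ w) with h | h
      · exact ⟨w, hw, h, le_rfl⟩
      · exact ⟨v, hv, le_rfl, h⟩
    obtain ⟨U, p, -, hUp, hzU, hUt⟩ := hsep z hzt
    have hmem : ∀ {C : Set X} {c e : X}, IsConnected C → c ∈ C → φ c ≤ φ z → e ∈ C → φ e = t →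
        p ∈ C := by
      intro C c e hC hc hcz he het
      by_contra hp
      obtain ⟨f, hfC, hf⟩ : (C ∩ frontier U).Nonempty := by
        by_contra hemp
        have hsub : C ⊆ interior U ∪ (closure U)ᶜ := fun x hx => by
          by_contra hx'
          simp only [mem_union, mem_compl_iff, not_or, not_not] at hx'
          exact hemp ⟨x, hx, hx'.2, hx'.1⟩
        have hcU : c ∈ interior U := (hsub hc).resolve_right fun h => h (subset_closure (hzU c hcz))
        have heU : e ∈ (closure U)ᶜ :=
          (hsub he).resolve_left fun h => (hUt e (interior_subset h)).ne het
        obtain ⟨y, -, hy1, hy2⟩ := hC.isPreconnected _ _ isOpen_interior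
          isClosed_closure.isOpen_compl hsub ⟨c, hc, hcU⟩ ⟨e, he, heU⟩
        exact hy2 (subset_closure (interior_subset hy1))
      exact hp (hUp hf ▸ hfC)
    exact disjoint_left.1 hAB (hVA (hmem hVc hvV hvz hxV hxt)) (hWB (hmem hWc hwW hwz hyW hyt))
  obtain ⟨p, hp, hpt⟩ : ∃ p ∈ closure {x | φ x < t}, φ p = t := by
    by_contra! hcon
    have hcl : IsClopen {x | φ x < t} :=
      ⟨closure_subset_iff_isClosed.1 fun x hx => lt_of_le_of_ne (hle x hx) (hcon x hx),
        isOpen_lt hφ continuous_const⟩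
    obtain ⟨x, hx⟩ := hge
    exact hx.not_gt ((hcl.eq_univ hlt) ▸ mem_univ x : x ∈ {x | φ x < t})
  refine ⟨p, hpt, fun x hx => ?_⟩
  rcases (hle x hx).lt_or_eq with h | h
  · exact Or.inr h
  · exact Or.inl (huniq x hx p hp h hpt)

/-- The map collapsing everything below and above a level to one point each is continuous. -/
theorem continuous_collapse {φ : X → ℝ} (hφ : Continuous φ) {t : ℝ} {p q : X}
    (hp : closure {x | φ x < t} ⊆ insert p {x | φ x < t})
    (hq : closure {x | t < φ x} ⊆ insert q {x | t < φ x}) :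
    Continuous fun x => if φ x < t then p else if t < φ x then q else x := by
  refine continuous_iff_continuousAt.2 fun x => ?_
  rcases lt_trichotomy (φ x) t with h | h | h
  · refine (continuousAt_const (y := p)).congr ?_
    filter_upwards [(isOpen_lt hφ continuous_const).mem_nhds h] with y hy
    rw [if_pos hy]
  · intro N hN
    simp only [h, lt_irrefl, if_false] at hN
    have h1 : ∀ᶠ y in 𝓝 x, φ y < t → p ∈ N := by
      by_cases hxp : x = p
      · exact Eventually.of_forall fun _ _ => hxp ▸ mem_of_mem_nhds hN
      · have : x ∉ closure {x | φ x < t} := fun hx =>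
          (hp hx).elim hxp fun hx : φ x < t => hx.ne h
        filter_upwards [isClosed_closure.isOpen_compl.mem_nhds this] with y hy hyt
        exact absurd (subset_closure (show y ∈ {x | φ x < t} from hyt)) hy
    have h2 : ∀ᶠ y in 𝓝 x, t < φ y → q ∈ N := by
      by_cases hxq : x = q
      · exact Eventually.of_forall fun _ _ => hxq ▸ mem_of_mem_nhds hN
      · have : x ∉ closure {x | t < φ x} := fun hx =>
          (hq hx).elim hxq fun hx : t < φ x => hx.ne' h
        filter_upwards [isClosed_closure.isOpen_compl.mem_nhds this] with y hy hyt
        exact absurd (subset_closure (show y ∈ {x | t < φ x} from hyt)) hy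
    rw [mem_map]
    filter_upwards [hN, h1, h2] with y hy hy1 hy2
    show (if φ y < t then p else if t < φ y then q else y) ∈ N
    split_ifs with c1 c2
    · exact hy1 c1
    · exact hy2 c2
    · exact hy
  · refine (continuousAt_const (y := q)).congr ?_
    filter_upwards [(isOpen_lt continuous_const hφ).mem_nhds h] with y hy
    rw [if_neg (not_lt_of_gt hy), if_pos hy]

/-- Levels slightly below `t` are contained in a given neighbourhood of the only limit point. -/
theorem exists_forall_mem_nhds_of_closure_sublevel_subset [CompactSpace X] {φ : X → ℝ}
    (hφ : Continuous φ) {t : ℝ} {p : X} (hp : closure {x | φ x < t} ⊆ insert p {x | φ x < t})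
    {N : Set X} (hN : N ∈ 𝓝 p) : ∃ s < t, ∀ x, s < φ x → φ x < t → x ∈ N := by
  obtain ⟨O, hON, hO, hpO⟩ := mem_nhds_iff.1 hN
  have hK : IsCompact (closure {x | φ x < t} \ O) := (isClosed_closure.sdiff hO).isCompact
  rcases (closure {x | φ x < t} \ O).eq_empty_or_nonempty with h | h
  · refine ⟨t - 1, by linarith, fun x _ hx => hON ?_⟩
    by_contra hxO
    exact (h ▸ (⟨subset_closure hx, hxO⟩ : x ∈ closure {x | φ x < t} \ O) : x ∈ (∅ : Set X))
  · obtain ⟨z, hz, hmax⟩ := hK.exists_isMaxOn h hφ.continuousOn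
    have hzt : φ z < t := (hp hz.1).resolve_left fun hzp => hz.2 (hzp ▸ hpO)
    refine ⟨φ z, hzt, fun x hzx hx => hON ?_⟩
    by_contra hxO
    exact hzx.not_ge (hmax ⟨subset_closure hx, hxO⟩)

/-- Each level set of the level function is a retract, by a retraction mapping the bottom point `a`
and the top point `b` to the points at which the level is approached from below and above. -/
theorem exists_level_retraction [T2Space X] [CompactSpace X] [ConnectedSpace X]
    [LocallyConnectedSpace X]
    {φ : X → ℝ} (hφ : Continuous φ) (hrange : range φ = Icc 0 1)
    (hsep : ∀ s t : ℝ, 0 ≤ s → s < t → t ≤ 1 → ∃ (U : Set X) (p : X), IsOpen U ∧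
      frontier U ⊆ {p} ∧ (∀ x, φ x ≤ s → x ∈ U) ∧ ∀ x ∈ closure U, φ x < t)
    {a b : X} (ha : φ a = 0) (hb : φ b = 1) {D : Set X} (hD : Dense D) {t : ℝ}
    (ht : t ∈ Icc (0 : ℝ) 1) :
    ∃ r : X → X, Continuous r ∧ (∀ x, φ (r x) = t) ∧ (∀ x, φ x = t → r x = x) ∧
      (∀ N ∈ 𝓝 (r a), ∃ s < t, ∀ x, s < φ x → φ x < t → x ∈ N) ∧
      (∀ N ∈ 𝓝 (r b), ∃ s > t, ∀ x, t < φ x → φ x < s → x ∈ N) ∧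
      ((∀ d ∈ D, φ d ≠ t) → ∀ x y, φ x = t → φ y = t → x = y) := by
  have hmem : ∀ x, φ x ∈ Icc (0 : ℝ) 1 := fun x => hrange ▸ mem_range_self x
  obtain ⟨p, hpt, hp⟩ : ∃ p, φ p = t ∧ closure {x | φ x < t} ⊆ insert p {x | φ x < t} := by
    rcases ht.1.eq_or_lt with h0 | h0
    · refine ⟨a, ha.trans h0, ?_⟩
      have : {x | φ x < t} = ∅ := eq_empty_of_forall_notMem fun x (hx : φ x < t) => by
        linarith [(hmem x).1]
      simp [this]
    · refine exists_closure_sublevel_subset hφ ⟨a, ha.trans_lt h0⟩ ⟨b, ht.2.trans hb.ge⟩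
        fun x hx => ?_
      obtain ⟨U, p, h1, h2, h3, h4⟩ := hsep (φ x) t (hmem x).1 hx ht.2
      exact ⟨U, p, h1, h2, h3, fun y hy => h4 y (subset_closure hy)⟩
  have hneg : {x | -φ x < -t} = {x | t < φ x} := by ext; simp
  obtain ⟨q, hqt, hq⟩ : ∃ q, φ q = t ∧ closure {x | t < φ x} ⊆ insert q {x | t < φ x} := by
    rcases ht.2.eq_or_lt with h1 | h1
    · refine ⟨b, hb.trans h1.symm, ?_⟩
      have : {x | t < φ x} = ∅ := eq_empty_of_forall_notMem fun x (hx : t < φ x) => by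
        linarith [(hmem x).2]
      simp [this]
    · obtain ⟨q, hqt, hq⟩ := exists_closure_sublevel_subset (φ := fun x => -φ x) (t := -t) hφ.neg
        ⟨b, by simpa [hb] using h1⟩ ⟨a, by simpa [ha] using ht.1⟩ fun x hx => by
          obtain ⟨U, p, h1, h2, h3, h4⟩ := hsep t (φ x) ht.1 (neg_lt_neg_iff.1 hx) (hmem x).2
          refine ⟨(closure U)ᶜ, p, isClosed_closure.isOpen_compl, ?_, fun y hy hyU => ?_,
            fun y hy => ?_⟩
          · rw [frontier_compl]
            exact frontier_closure_subset.trans h2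
          · linarith [h4 y hyU]
          · by_contra! hyt
            exact hy (subset_closure (h3 y (neg_le_neg_iff.1 hyt)))
      exact ⟨q, neg_inj.1 hqt, hneg ▸ hq⟩
  set r : X → X := fun x => if φ x < t then p else if t < φ x then q else x with hr
  have hrc : Continuous r := continuous_collapse hφ hp hq
  have hrt : ∀ x, φ (r x) = t := by
    intro x
    simp only [hr]
    split_ifs with h1 h2
    · exact hpt
    · exact hqt
    · exact le_antisymm (not_lt.1 h2) (not_lt.1 h1)
  have hrid : ∀ x, φ x = t → r x = x := fun x hx => by simp [hr, hx]
  refine ⟨r, hrc, hrt, hrid, fun N hN => ?_, fun N hN => ?_, fun hDt x y hx hy => ?_⟩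
  · rcases ht.1.eq_or_lt with h0 | h0
    · exact ⟨t - 1, by linarith, fun x _ hx => by linarith [(hmem x).1]⟩
    · rw [show r a = p by simp [hr, ha, h0]] at hN
      exact exists_forall_mem_nhds_of_closure_sublevel_subset hφ hp hN
  · rcases ht.2.eq_or_lt with h1 | h1
    · exact ⟨t + 1, by linarith, fun x hx _ => by linarith [(hmem x).2]⟩
    · rw [show r b = q by simp [hr, hb, h1, ht.2]] at hN
      obtain ⟨s, hs, h⟩ := exists_forall_mem_nhds_of_closure_sublevel_subset
        (φ := fun x => -φ x) (t := -t) hφ.neg (hneg.symm ▸ hq) hN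
      exact ⟨-s, by linarith, fun x h1 h2 => h x (by linarith) (by linarith)⟩
  · have hpair : {x | φ x = t} ⊆ {p, q} := by
      intro z hz
      by_contra hzpq
      have hzp : z ≠ p := fun h => hzpq (Or.inl h)
      have hzq : z ≠ q := fun h => hzpq (Or.inr h)
      obtain ⟨d, hd, hdD⟩ := hD.inter_open_nonempty
        ((closure {x | φ x < t})ᶜ ∩ (closure {x | t < φ x})ᶜ)
        (isClosed_closure.isOpen_compl.inter isClosed_closure.isOpen_compl)
        ⟨z, fun h => (hp h).elim hzp fun h : φ z < t => h.ne hz,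
          fun h => (hq h).elim hzq fun h : t < φ z => h.ne' hz⟩
      refine hDt d hdD (le_antisymm ?_ ?_)
      · exact not_lt.1 fun h => hd.2 (subset_closure h)
      · exact not_lt.1 fun h => hd.1 (subset_closure h)
    have hconn : IsPreconnected {x | φ x = t} := by
      have : {x | φ x = t} = range r := Subset.antisymm (fun x hx => ⟨x, hrid x hx⟩)
        (by rintro _ ⟨x, rfl⟩; exact hrt x)
      rw [this]
      exact isPreconnected_range hrc
    by_contra hxy
    exact hconn.infinite_of_nontrivial ⟨x, hx, y, hy, hxy⟩ ((toFinite {p, q}).subset hpair)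

end Levels

/-- A monotone function with values in `[0, 1]`, added to `2 * t`, takes every value if jumps are
filled in. -/
theorem exists_leftLim_le_le_rightLim {W : ℝ → ℝ} (hW : Monotone W) (h0 : ∀ t, 0 ≤ W t)
    (h1 : ∀ t, W t ≤ 1) (u : ℝ) :
    ∃ t, 2 * t + Function.leftLim W t ≤ u ∧ u ≤ 2 * t + Function.rightLim W t := by
  set A : Set ℝ := {t | 2 * t + W t ≤ u} with hA
  have hne : A.Nonempty := ⟨(u - 1) / 2, by
    show 2 * ((u - 1) / 2) + W ((u - 1) / 2) ≤ u
    linarith [h1 ((u - 1) / 2)]⟩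
  have hbdd : BddAbove A := ⟨u / 2, fun t (ht : 2 * t + W t ≤ u) => by linarith [h0 t]⟩
  have hlin : ∀ s : Set ℝ, Tendsto (fun x : ℝ => 2 * x) (𝓝[s] (sSup A)) (𝓝 (2 * sSup A)) :=
    fun s => (continuous_const.mul continuous_id).continuousAt.tendsto.mono_left nhdsWithin_le_nhds
  refine ⟨sSup A, ?_, ?_⟩
  · refine le_of_tendsto ((hlin _).add (hW.tendsto_leftLim _)) ?_
    filter_upwards [self_mem_nhdsWithin] with x hx
    obtain ⟨y, hy, hxy⟩ := exists_lt_of_lt_csSup hne hx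
    have : 2 * y + W y ≤ u := hy
    linarith [hW hxy.le]
  · refine ge_of_tendsto ((hlin _).add (hW.tendsto_rightLim _)) ?_
    filter_upwards [self_mem_nhdsWithin] with x hx
    by_contra! hlt
    exact (le_csSup hbdd hlt.le).not_gt hx

/-- A Peano continuum with a level function is parametrized by an interval so that the level
varies slowly with the parameter. -/
theorem exists_level_parametrization {X : Type*} [MetricSpace X] [CompactSpace X]
    [ConnectedSpace X] [LocallyConnectedSpace X] {φ : X → ℝ} (hφ : Continuous φ)
    (hrange : range φ = Icc 0 1)
    (hsep : ∀ s t : ℝ, 0 ≤ s → s < t → t ≤ 1 → ∃ (U : Set X) (p : X), IsOpen U ∧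
      frontier U ⊆ {p} ∧ (∀ x, φ x ≤ s → x ∈ U) ∧ ∀ x ∈ closure U, φ x < t) :
    ∃ Γ : ℝ → X, ContinuousOn Γ (Icc 0 3) ∧ (∀ x, ∃ u ∈ Icc (0 : ℝ) 3, Γ u = x) ∧
      ∀ u ∈ Icc (0 : ℝ) 3, ∀ v ∈ Icc (0 : ℝ) 3, |φ (Γ u) - φ (Γ v)| ≤ |u - v| / 2 := by
  obtain ⟨a, ha⟩ : (0 : ℝ) ∈ range φ := hrange ▸ ⟨le_rfl, zero_le_one⟩
  obtain ⟨b, hb⟩ : (1 : ℝ) ∈ range φ := hrange ▸ ⟨zero_le_one, le_rfl⟩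
  have hmem : ∀ x, φ x ∈ Icc (0 : ℝ) 1 := fun x => hrange ▸ mem_range_self x
  obtain ⟨γ, hγ⟩ := exists_path_surjective a b
  let d := TopologicalSpace.denseSeq X
  have hd : Dense (range d) := TopologicalSpace.denseRange_denseSeq X
  choose! r hrc hrt hrid hra hrb hrs using fun t (ht : t ∈ Icc (0 : ℝ) 1) =>
    exists_level_retraction hφ hrange hsep ha hb hd ht
  let W : ℝ → ℝ := fun t => geometricMass {n | φ (d n) < t}
  have hW : Monotone W := fun s t hst => geometricMass_mono fun n (hn : φ (d n) < s) =>
    hn.trans_le hst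
  have hW0 : ∀ t ≤ 0, W t = 0 := fun t ht => by
    have : {n | φ (d n) < t} = ∅ := eq_empty_of_forall_notMem fun n (hn : φ (d n) < t) => by
      linarith [(hmem (d n)).1]
    simp only [W, this, geometricMass_empty]
  have hW1 : ∀ t > 1, W t = 1 := fun t ht => by
    have : {n | φ (d n) < t} = univ := eq_univ_of_forall fun n => (hmem (d n)).2.trans_lt ht
    simp only [W, this, geometricMass_univ]
  have hWnonneg : ∀ t, 0 ≤ W t := fun t =>
    geometricMass_empty.ge.trans (geometricMass_mono (empty_subset _))
  have hWle : ∀ t, W t ≤ 1 := fun t =>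
    (geometricMass_mono (subset_univ _)).trans geometricMass_univ.le
  let L : ℝ → ℝ := fun t => 2 * t + Function.leftLim W t
  let R : ℝ → ℝ := fun t => 2 * t + Function.rightLim W t
  have hLR : ∀ t, L t ≤ R t := fun t => by
    have := hW.leftLim_le_rightLim (le_refl t)
    simp only [L, R]
    linarith
  have hRL : ∀ s t, s < t → R s + 2 * (t - s) ≤ L t := fun s t hst => by
    have := hW.rightLim_le_leftLim hst
    simp only [L, R]
    linarith
  have hjump : ∀ n, L (φ (d n)) < R (φ (d n)) := fun n => by
    have hpos : (0 : ℝ) < 1 / 2 / 2 ^ n := by positivity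
    have h1 : Function.leftLim W (φ (d n)) ≤ W (φ (d n)) := hW.leftLim_le le_rfl
    have h2 : W (φ (d n)) + 1 / 2 / 2 ^ n ≤ Function.rightLim W (φ (d n)) := by
      refine ge_of_tendsto (hW.tendsto_rightLim _) ?_
      filter_upwards [self_mem_nhdsWithin] with t ht
      exact geometricMass_add_le (fun m (hm : φ (d m) < φ (d n)) => hm.trans ht)
        (lt_irrefl (φ (d n))) ht
    simp only [L, R]
    linarith
  choose lev hlevL hlevR using exists_leftLim_le_le_rightLim hW hWnonneg hWle
  replace hlevL : ∀ u, L (lev u) ≤ u := hlevL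
  replace hlevR : ∀ u, u ≤ R (lev u) := hlevR
  have hlev_mem : ∀ u ∈ Icc (0 : ℝ) 3, lev u ∈ Icc (0 : ℝ) 1 := by
    intro u hu
    constructor
    · by_contra! h
      have h1 : Function.rightLim W (lev u) ≤ W 0 := hW.rightLim_le h
      have h2 : u ≤ 2 * lev u + Function.rightLim W (lev u) := hlevR u
      linarith [hu.1, hW0 0 le_rfl]
    · by_contra! h
      obtain ⟨t, ht, htu⟩ := exists_between h
      have h1 : W t ≤ Function.leftLim W (lev u) := hW.le_leftLim htu
      have h2 : 2 * lev u + Function.leftLim W (lev u) ≤ u := hlevL u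
      linarith [hu.2, hW1 t ht]
  have hlip : ∀ u v, |lev u - lev v| ≤ |u - v| / 2 := by
    have key : ∀ u v, lev u < lev v → lev v - lev u ≤ (v - u) / 2 := fun u v h => by
      linarith [hRL _ _ h, hlevR u, hlevL v]
    intro u v
    rcases lt_trichotomy (lev u) (lev v) with h | h | h
    · have := key u v h
      rw [abs_sub_comm, abs_of_pos (sub_pos.2 h), abs_sub_comm]
      linarith [le_abs_self (v - u)]
    · rw [h, sub_self, abs_zero]
      positivity
    · have := key v u h
      rw [abs_of_pos (sub_pos.2 h)]
      linarith [le_abs_self (u - v)]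
  have hlev_eq : ∀ t u, L t ≤ u → u ≤ R t → lev u = t := by
    intro t u h1 h2
    rcases lt_trichotomy (lev u) t with h | h | h
    · linarith [hRL _ _ h, hlevR u]
    · exact h
    · linarith [hRL _ _ h, hlevL u]
  let G : ℝ → ℝ → X := fun t u => r t (γ.extend ((u - L t) / (R t - L t)))
  let Γ : ℝ → X := fun u => G (lev u) u
  have hG : ∀ t ∈ Icc (0 : ℝ) 1, Continuous (G t) := fun t ht =>
    (hrc t ht).comp (γ.continuous_extend.comp ((continuous_id.sub continuous_const).div_const _))
  have hφΓ : ∀ u ∈ Icc (0 : ℝ) 3, φ (Γ u) = lev u := fun u hu => hrt _ (hlev_mem u hu) _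
  have hsing : ∀ t ∈ Icc (0 : ℝ) 1, L t = R t → ∀ x y, φ x = t → φ y = t → x = y := by
    intro t ht hLRt
    refine hrs t ht ?_
    rintro _ ⟨n, rfl⟩ rfl
    exact (hjump n).ne hLRt
  refine ⟨Γ, fun u₀ hu₀ N hN => ?_, fun x => ?_, fun u hu v hv => ?_⟩
  · have ht₀ := hlev_mem u₀ hu₀
    set t₀ := lev u₀ with ht₀def
    have hlevc : Tendsto lev (𝓝 u₀) (𝓝 t₀) := by
      rw [tendsto_iff_dist_tendsto_zero]
      refine squeeze_zero (fun _ => dist_nonneg) (fun u => (Real.dist_eq _ _).trans_le (hlip u u₀)) ?_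
      have : Continuous fun u : ℝ => |u - u₀| / 2 := by fun_prop
      simpa using this.tendsto u₀
    have heq : ∀ᶠ u in 𝓝 u₀, lev u = t₀ → Γ u ∈ N := by
      filter_upwards [(hG t₀ ht₀).continuousAt.preimage_mem_nhds hN] with u hu h
      have hu' : G t₀ u ∈ N := hu
      show G (lev u) u ∈ N
      rwa [h]
    have hlt : ∀ᶠ u in 𝓝 u₀, u ∈ Icc (0 : ℝ) 3 → lev u < t₀ → Γ u ∈ N := by
      rcases (hlevL u₀).lt_or_eq with h | h
      · filter_upwards [eventually_gt_nhds h] with u hu _ hlt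
        linarith [hRL _ _ hlt, hlevR u]
      · have hΓ : Γ u₀ = r t₀ a := by
          have : u₀ - L (lev u₀) = 0 := by linarith
          simp only [Γ, G, this, zero_div, Path.extend_zero, ht₀def]
        obtain ⟨s, hs, hsN⟩ := hra t₀ ht₀ N (hΓ ▸ hN)
        filter_upwards [hlevc.eventually (eventually_gt_nhds hs)] with u hu hmem hlt
        exact hsN _ (by rwa [hφΓ u hmem]) (by rwa [hφΓ u hmem])
    have hgt : ∀ᶠ u in 𝓝 u₀, u ∈ Icc (0 : ℝ) 3 → t₀ < lev u → Γ u ∈ N := by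
      rcases (hlevR u₀).lt_or_eq with h | h
      · filter_upwards [eventually_lt_nhds h] with u hu _ hgt
        linarith [hRL _ _ hgt, hlevL u]
      · have hΓ : Γ u₀ = r t₀ b := by
          rcases (hLR t₀).lt_or_eq with hj | hj
          · have : (u₀ - L (lev u₀)) / (R (lev u₀) - L (lev u₀)) = 1 := by
              have hnum : u₀ - L (lev u₀) = R (lev u₀) - L (lev u₀) := by linarith
              rw [hnum]
              exact div_self (sub_pos.2 hj).ne'
            simp only [Γ, G, this, Path.extend_one, ht₀def]
          · exact hsing t₀ ht₀ hj _ _ (hφΓ u₀ hu₀) (hrt t₀ ht₀ b)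
        obtain ⟨s, hs, hsN⟩ := hrb t₀ ht₀ N (hΓ ▸ hN)
        filter_upwards [hlevc.eventually (eventually_lt_nhds hs)] with u hu hmem hgt
        exact hsN _ (by rwa [hφΓ u hmem]) (by rwa [hφΓ u hmem])
    rw [mem_map]
    filter_upwards [nhdsWithin_le_nhds heq, nhdsWithin_le_nhds hlt, nhdsWithin_le_nhds hgt,
      self_mem_nhdsWithin] with u h1 h2 h3 hu
    rcases lt_trichotomy (lev u) t₀ with h | h | h
    · exact h2 hu h
    · exact h1 h
    · exact h3 hu h
  · obtain ⟨s, hs⟩ := hγ x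
    have ht := hmem x
    set t := φ x with htdef
    have hu1 : L t ≤ L t + s * (R t - L t) :=
      le_add_of_nonneg_right (mul_nonneg s.2.1 (sub_nonneg.2 (hLR t)))
    have hu2 : L t + s * (R t - L t) ≤ R t := by
      nlinarith [mul_le_mul_of_nonneg_right s.2.2 (sub_nonneg.2 (hLR t))]
    have hL0 : 0 ≤ L t := by
      have : W (t - 1) ≤ Function.leftLim W t := hW.le_leftLim (by linarith)
      have h0 := hWnonneg (t - 1)
      simp only [L]
      linarith [ht.1]
    have hR3 : R t ≤ 3 := by
      have : Function.rightLim W t ≤ W (t + 1) := hW.rightLim_le (by linarith)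
      have h1 := hWle (t + 1)
      simp only [R]
      linarith [ht.2]
    have hu : L t + s * (R t - L t) ∈ Icc (0 : ℝ) 3 := ⟨hL0.trans hu1, hu2.trans hR3⟩
    have hlev := hlev_eq t _ hu1 hu2
    refine ⟨_, hu, ?_⟩
    rcases (hLR t).lt_or_eq with hj | hj
    · have : (L t + s * (R t - L t) - L t) / (R t - L t) = s := by
        rw [add_sub_cancel_left, mul_div_cancel_right₀ _ (sub_pos.2 hj).ne']
      simp only [Γ, G, hlev, this, hs, γ.extend_extends' s]
      exact hrid t ht x rfl
    · exact hsing t ht hj _ _ ((hφΓ _ hu).trans hlev) rfl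
  · rw [hφΓ u hu, hφΓ v hv]
    exact hlip u v

/-- Maps which factor through a level function and change the level slowly are topologically
contractive. -/
theorem topContractive_of_level {X : Type*} [MetricSpace X] [Nonempty X] {φ : X → ℝ}
    (hφ : ∀ x, φ x ∈ Icc (0 : ℝ) 1) {F : Set (X → X)}
    (hF : ∀ f ∈ F, ∀ x y, |φ (f x) - φ (f y)| ≤ 3 / 4 * |φ x - φ y|)
    (hunif : ∀ ε > 0, ∃ δ > 0, ∀ f ∈ F, ∀ x y, |φ x - φ y| < δ → dist (f x) (f y) < ε) :
    TopContractive F := by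
  have hlist : ∀ l : List (X → X), (∀ f ∈ l, f ∈ F) → ∀ x y,
      |φ (l.foldr (· ∘ ·) id x) - φ (l.foldr (· ∘ ·) id y)| ≤ (3 / 4) ^ l.length := by
    intro l
    induction l with
    | nil =>
      intro _ x y
      have hx := hφ x
      have hy := hφ y
      simp only [List.foldr_nil, id, List.length_nil, pow_zero, abs_le]
      constructor <;> linarith [hx.1, hx.2, hy.1, hy.2]
    | cons f l ih =>
      intro hl x y
      have h1 := ih (fun g hg => hl g (List.mem_cons_of_mem _ hg)) x y
      have h2 := hF f (hl f List.mem_cons_self) (l.foldr (· ∘ ·) id x) (l.foldr (· ∘ ·) id y)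
      simp only [List.foldr_cons, Function.comp_apply, List.length_cons, pow_succ]
      linarith
  intro ε hε
  obtain ⟨δ, hδ, hδF⟩ := hunif (ε / 2) (half_pos hε)
  obtain ⟨k, hk⟩ := exists_pow_lt_of_lt_one hδ (show (3 / 4 : ℝ) < 1 by norm_num)
  refine ⟨k + 1, fun l hl hlen => ?_⟩
  cases l with
  | nil => simp at hlen
  | cons f l =>
    refine lt_of_le_of_lt (Metric.diam_le_of_forall_dist_le (half_pos hε).le ?_) (half_lt_self hε)
    rintro _ ⟨x, rfl⟩ _ ⟨y, rfl⟩
    have hlk : l.length = k := by simpa using hlen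
    refine (hδF f (hl f List.mem_cons_self) _ _ (lt_of_le_of_lt (hlist l
      (fun g hg => hl g (List.mem_cons_of_mem _ hg)) x y) ?_)).le
    rwa [hlk]

/-- Every Peano continuum with uncountably many cut points is a topological fractal
with witnessing number two: there are two continuous self-maps `f, g` such that
`{f, g}` is topologically contractive and `f(X) ∪ g(X) = X`. -/
theorem peano_uncountably_many_cut_points_is_topological_fractal
    (X : Type*) [MetricSpace X] [CompactSpace X] [ConnectedSpace X]
    [LocallyConnectedSpace X] [Nonempty X]
    (h : ¬ ({x : X | IsCutPoint x}).Countable) :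
    ∃ f g : X → X, Continuous f ∧ Continuous g ∧
      TopContractive {f, g} ∧ Set.range f ∪ Set.range g = Set.univ := by
  obtain ⟨φ, hφ, hrange, hsep⟩ := exists_level_function h
  obtain ⟨Γ, hΓ, hΓsurj, hΓφ⟩ := exists_level_parametrization hφ hrange hsep
  have hmem : ∀ x, φ x ∈ Icc (0 : ℝ) 1 := fun x => hrange ▸ mem_range_self x
  have hf : ∀ x, 3 / 2 * φ x ∈ Icc (0 : ℝ) 3 := fun x => by
    constructor <;> linarith [(hmem x).1, (hmem x).2]
  have hg : ∀ x, 3 / 2 + 3 / 2 * φ x ∈ Icc (0 : ℝ) 3 := fun x => by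
    constructor <;> linarith [(hmem x).1, (hmem x).2]
  have habs : ∀ x y, |3 / 2 * φ x - 3 / 2 * φ y| = 3 / 2 * |φ x - φ y| := fun x y => by
    rw [← mul_sub, abs_mul, abs_of_pos (by norm_num : (0 : ℝ) < 3 / 2)]
  refine ⟨fun x => Γ (3 / 2 * φ x), fun x => Γ (3 / 2 + 3 / 2 * φ x),
    hΓ.comp_continuous (by fun_prop) hf, hΓ.comp_continuous (by fun_prop) hg,
    topContractive_of_level hmem ?_ ?_, eq_univ_of_forall fun x => ?_⟩
  · rintro _ (rfl | rfl) x y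
    · linarith [hΓφ _ (hf x) _ (hf y), habs x y]
    · have := hΓφ _ (hg x) _ (hg y)
      rw [add_sub_add_left_eq_sub, habs] at this
      linarith
  · intro ε hε
    obtain ⟨δ, hδ, hΓδ⟩ := Metric.uniformContinuousOn_iff.1
      (isCompact_Icc.uniformContinuousOn_of_continuous hΓ) ε hε
    refine ⟨δ / 2, half_pos hδ, ?_⟩
    rintro _ (rfl | rfl) x y hxy
    · refine hΓδ _ (hf x) _ (hf y) ?_
      rw [Real.dist_eq, habs]
      linarith
    · refine hΓδ _ (hg x) _ (hg y) ?_
      rw [Real.dist_eq, add_sub_add_left_eq_sub, habs]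
      linarith
  · obtain ⟨u, hu, rfl⟩ := hΓsurj x
    rcases le_total u (3 / 2) with h | h
    · obtain ⟨y, hy⟩ : 2 / 3 * u ∈ range φ := hrange ▸ ⟨by linarith [hu.1], by linarith⟩
      exact Or.inl ⟨y, by simp only [hy]; congr 1; ring⟩
    · obtain ⟨y, hy⟩ : 2 / 3 * u - 1 ∈ range φ := hrange ▸ ⟨by linarith, by linarith [hu.2]⟩
      exact Or.inr ⟨y, by simp only [hy]; congr 1; ring⟩
end
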